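/- Let k ≥ 6 be an even integer, and for each n let spex(n, W_{2k+1}) denote the maximum of λ₁(G) over all n-vertex W_{2k+1}-free simple graphs G. Then, as n → ∞ along integers with n ≡ 2 (mod 4), the quantity n · ( spex(n, W_{2k+1}) − (k − 1 + √((k−1)² + n²))/2 ) tends to 1; equivalently, for n ≡ 2 (mod 4), spex(n, W_{2k+1}) = (k − 1 + √((k−1)² + n²))/2 + (1 + o(1))/n. -/

import Mathlib

/-- The wheel graph on `t` vertices: vertex `0` joined to every vertex of the
cycle `1, 2, …, t-1` (with `t-1` adjacent to `1`). -/
def wheelGraph (t : ℕ) : SimpleGraph (Fin t) where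
  Adj a b := a ≠ b ∧ (a.val = 0 ∨ b.val = 0 ∨ a.val + 1 = b.val ∨ b.val + 1 = a.val ∨
      (a.val = 1 ∧ b.val = t - 1) ∨ (b.val = 1 ∧ a.val = t - 1))
  symm := by
    constructor
    intro a b h
    exact ⟨h.1.symm, by tauto⟩
  loopless := by
    constructor
    intro a h
    exact h.1 rfl

/-- `G` contains a copy of `F`, i.e. a subgraph isomorphic to `F`. -/
def ContainsCopy {α β : Type*} (F : SimpleGraph α) (G : SimpleGraph β) : Prop :=
  ∃ f : α ↪ β, ∀ a b, F.Adj a b → G.Adj (f a) (f b)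

/-- `G` is `W_t`-free: it contains no subgraph isomorphic to the wheel on `t` vertices. -/
def WheelFree (t : ℕ) {n : ℕ} (G : SimpleGraph (Fin n)) : Prop :=
  ¬ ContainsCopy (wheelGraph t) G

/-- The spectral radius of `G`: the largest eigenvalue of its adjacency matrix. -/
noncomputable def lam1 {n : ℕ} (G : SimpleGraph (Fin n)) : ℝ := by
  classical
  exact sSup {μ : ℝ | Module.End.HasEigenvalue (Matrix.toLin' (G.adjMatrix ℝ)) μ}

/-- The number of edges of a graph on a finite vertex type. -/
noncomputable def edgeCount {V : Type*} [Fintype V] (G : SimpleGraph V) : ℕ := by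
  classical
  exact G.edgeFinset.card

/-- The degree of a vertex. -/
noncomputable def deg {n : ℕ} (G : SimpleGraph (Fin n)) (v : Fin n) : ℕ := by
  classical
  exact G.degree v

/-- The number of neighbours of `v` inside the set `A`. -/
noncomputable def degIn {n : ℕ} (G : SimpleGraph (Fin n)) (A : Finset (Fin n)) (v : Fin n) : ℕ := by
  classical
  exact (A.filter fun u => G.Adj v u).card

/-- The number of edges of `G` with one endpoint in `S` and the other outside `S`. -/
noncomputable def cutCount {n : ℕ} (G : SimpleGraph (Fin n)) (S : Finset (Fin n)) : ℕ := by
  classical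
  exact ((Finset.univ : Finset (Fin n × Fin n)).filter
    fun p => G.Adj p.1 p.2 ∧ p.1 ∈ S ∧ p.2 ∉ S).card

/-- `(S, T)` is a maximum cut of `G`. -/
def IsMaxCut {n : ℕ} (G : SimpleGraph (Fin n)) (S T : Finset (Fin n)) : Prop :=
  T = Sᶜ ∧ ∀ S' : Finset (Fin n), cutCount G S' ≤ cutCount G S

/-- `G` attains the maximum spectral radius among all `n`-vertex `W_t`-free graphs. -/
def IsSpexWheel (t : ℕ) {n : ℕ} (G : SimpleGraph (Fin n)) : Prop :=
  WheelFree t G ∧ ∀ H : SimpleGraph (Fin n), WheelFree t H → lam1 H ≤ lam1 G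

/-- `G` attains the maximum number of edges among all `n`-vertex `W_t`-free graphs. -/
def IsExWheel (t : ℕ) {n : ℕ} (G : SimpleGraph (Fin n)) : Prop :=
  WheelFree t G ∧ ∀ H : SimpleGraph (Fin n), WheelFree t H → edgeCount H ≤ edgeCount G

/-- The maximum spectral radius among all `n`-vertex `W_{2k+1}`-free graphs. -/
noncomputable def spexWheel (k n : ℕ) : ℝ :=
  sSup {x : ℝ | ∃ G : SimpleGraph (Fin n), WheelFree (2 * k + 1) G ∧ lam1 G = x}


open Classical in
/-- The quadratic form of the adjacency matrix. -/
noncomputable def qf {V : Type*} [Fintype V] (G : SimpleGraph V) (x : V → ℝ) : ℝ :=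
  ∑ v, ∑ w, if G.Adj v w then x v * x w else 0

open Classical in
/-- The neighbour sum. -/
noncomputable def nsum {V : Type*} [Fintype V] (G : SimpleGraph V) (x : V → ℝ) (v : V) : ℝ :=
  ∑ w, if G.Adj v w then x w else 0

lemma qf_eq_nsum {V : Type*} [Fintype V] (G : SimpleGraph V) (x : V → ℝ) :
    qf G x = ∑ v, x v * nsum G x v := by
  classical
  unfold qf nsum
  refine Finset.sum_congr rfl fun v _ => ?_
  rw [Finset.mul_sum]
  refine Finset.sum_congr rfl fun w _ => ?_
  split_ifs <;> simp

section spectral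
open Classical Matrix

lemma mulVec_eq_nsum {n : ℕ} (G : SimpleGraph (Fin n)) (x : Fin n → ℝ) (v : Fin n) :
    (G.adjMatrix ℝ *ᵥ x) v = nsum G x v := by
  simp [nsum, Matrix.mulVec, dotProduct, SimpleGraph.adjMatrix_apply]

lemma hasEV_iff {n : ℕ} (A : Matrix (Fin n) (Fin n) ℝ) (μ : ℝ) :
    Module.End.HasEigenvalue (Matrix.toLin' A) μ ↔ ∃ x : Fin n → ℝ, x ≠ 0 ∧ A *ᵥ x = μ • x := by
  constructor
  · intro h
    obtain ⟨x, hx⟩ := h.exists_hasEigenvector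
    refine ⟨x, hx.2, ?_⟩
    simpa using hx.apply_eq_smul
  · rintro ⟨x, hx, h⟩
    refine Module.End.hasEigenvalue_of_hasEigenvector (x := x) ⟨?_, hx⟩
    rw [Module.End.mem_eigenspace_iff]
    simpa using h

lemma ev_finite {n : ℕ} (A : Matrix (Fin n) (Fin n) ℝ) :
    {μ : ℝ | Module.End.HasEigenvalue (Matrix.toLin' A) μ}.Finite := by
  have := Module.End.finite_hasEigenvalue (Matrix.toLin' A)
  exact this

lemma lam1_def {n : ℕ} (G : SimpleGraph (Fin n)) :
    lam1 G = sSup {μ : ℝ | Module.End.HasEigenvalue (Matrix.toLin' (G.adjMatrix ℝ)) μ} := by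
  unfold lam1
  congr!

lemma lam1_psd {n : ℕ} (G : SimpleGraph (Fin n)) :
    ((lam1 G) • (1 : Matrix (Fin n) (Fin n) ℝ) - G.adjMatrix ℝ).PosSemidef := by
  have hH : ((lam1 G) • (1 : Matrix (Fin n) (Fin n) ℝ) - G.adjMatrix ℝ).IsHermitian := by
    have h1 : (G.adjMatrix ℝ).IsHermitian := by
      unfold Matrix.IsHermitian
      rw [Matrix.conjTranspose_eq_transpose_of_trivial, SimpleGraph.transpose_adjMatrix]
    refine Matrix.IsHermitian.sub ?_ h1
    unfold Matrix.IsHermitian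
    simp
  rw [hH.posSemidef_iff_eigenvalues_nonneg]
  intro i
  have h := hH.mulVec_eigenvectorBasis i
  set y : Fin n → ℝ := (hH.eigenvectorBasis i).ofLp with hy
  have hy0 : y ≠ 0 := by
    intro h0
    have := hH.eigenvectorBasis.orthonormal.ne_zero i
    apply this
    ext j
    exact congrFun h0 j
  have h2 : G.adjMatrix ℝ *ᵥ y = (lam1 G - hH.eigenvalues i) • y := by
    rw [Matrix.sub_mulVec, Matrix.smul_mulVec, Matrix.one_mulVec] at h
    rw [sub_smul]
    rw [← h]
    simp
  have h3 : Module.End.HasEigenvalue (Matrix.toLin' (G.adjMatrix ℝ)) (lam1 G - hH.eigenvalues i) :=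
    (hasEV_iff _ _).2 ⟨y, hy0, h2⟩
  have h4 : lam1 G - hH.eigenvalues i ≤ lam1 G := by
    conv_rhs => rw [lam1_def]
    exact le_csSup (ev_finite _).bddAbove h3
  show 0 ≤ hH.eigenvalues i
  linarith

lemma psd_form {n : ℕ} (G : SimpleGraph (Fin n)) (x : Fin n → ℝ) :
    star x ⬝ᵥ (((lam1 G) • (1 : Matrix (Fin n) (Fin n) ℝ) - G.adjMatrix ℝ) *ᵥ x)
      = lam1 G * ∑ v, x v ^ 2 - qf G x := by
  rw [qf_eq_nsum, Matrix.sub_mulVec, Matrix.smul_mulVec, Matrix.one_mulVec]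
  simp only [dotProduct, Pi.sub_apply, Pi.smul_apply, mulVec_eq_nsum, star_trivial, smul_eq_mul]
  rw [Finset.mul_sum, ← Finset.sum_sub_distrib]
  refine Finset.sum_congr rfl fun v _ => ?_
  ring

lemma qf_le {n : ℕ} (G : SimpleGraph (Fin n)) (x : Fin n → ℝ) :
    qf G x ≤ lam1 G * ∑ v, x v ^ 2 := by
  have h := (lam1_psd G).dotProduct_mulVec_nonneg x
  rw [psd_form] at h
  linarith

lemma exists_perron {n : ℕ} (hn : 0 < n) (G : SimpleGraph (Fin n)) :
    ∃ x : Fin n → ℝ, (∀ v, 0 ≤ x v) ∧ (∀ v, x v ≤ 1) ∧ (∃ v, x v = 1) ∧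
      ∀ v, nsum G x v = lam1 G * x v := by
  haveI : Nonempty (Fin n) := ⟨⟨0, hn⟩⟩
  have h1 : (G.adjMatrix ℝ).IsHermitian := by
    unfold Matrix.IsHermitian
    rw [Matrix.conjTranspose_eq_transpose_of_trivial, SimpleGraph.transpose_adjMatrix]
  have hne : {μ : ℝ | Module.End.HasEigenvalue (Matrix.toLin' (G.adjMatrix ℝ)) μ}.Nonempty := by
    refine ⟨h1.eigenvalues ⟨0, hn⟩, (hasEV_iff _ _).2 ⟨_, ?_, h1.mulVec_eigenvectorBasis _⟩⟩
    intro h0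
    apply h1.eigenvectorBasis.orthonormal.ne_zero ⟨0, hn⟩
    ext j
    exact congrFun h0 j
  have hmem := hne.csSup_mem (ev_finite _)
  rw [← lam1_def] at hmem
  obtain ⟨y, hy0, hy⟩ := (hasEV_iff _ _).1 hmem
  have hys : ∀ v, nsum G y v = lam1 G * y v := by
    intro v
    rw [← mulVec_eq_nsum, hy]; simp
  have hqy : qf G y = lam1 G * ∑ v, y v ^ 2 := by
    rw [qf_eq_nsum, Finset.mul_sum]
    refine Finset.sum_congr rfl fun v _ => ?_
    rw [hys]; ring
  set z : Fin n → ℝ := fun v => |y v| with hz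
  have hqz : qf G y ≤ qf G z := by
    unfold qf
    refine Finset.sum_le_sum fun v _ => Finset.sum_le_sum fun w _ => ?_
    split_ifs
    · rw [hz]; simp only; rw [← abs_mul]; exact le_abs_self _
    · exact le_rfl
  have hzz : ∑ v, z v ^ 2 = ∑ v, y v ^ 2 := by
    refine Finset.sum_congr rfl fun v _ => ?_
    simp [hz]
  have hqz' : qf G z = lam1 G * ∑ v, z v ^ 2 := by
    apply le_antisymm (qf_le G z)
    rw [hzz, ← hqy]; exact hqz
  have hker := ((lam1_psd G).dotProduct_mulVec_zero_iff z).1 (by rw [psd_form, hqz', sub_self])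
  have hzs : ∀ v, nsum G z v = lam1 G * z v := by
    intro v
    have := congrFun hker v
    rw [Matrix.sub_mulVec, Matrix.smul_mulVec, Matrix.one_mulVec] at this
    simp only [Pi.sub_apply, Pi.smul_apply, mulVec_eq_nsum, smul_eq_mul, Pi.zero_apply] at this
    linarith
  obtain ⟨u, hu⟩ := Finite.exists_max z
  have hup : 0 < z u := by
    by_contra hcon
    apply hy0
    funext v
    have h1 := hu v
    have h2 : 0 ≤ z v := abs_nonneg _
    have h3 : z v = 0 := by linarith
    simpa [hz] using h3
  refine ⟨fun v => z v / z u, fun v => div_nonneg (abs_nonneg _) hup.le,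
    fun v => (div_le_one hup).2 (hu v), ⟨u, div_self hup.ne'⟩, fun v => ?_⟩
  have := hzs v
  unfold nsum at this ⊢
  rw [← mul_div_assoc, ← this, Finset.sum_div]
  refine Finset.sum_congr rfl fun w _ => ?_
  split_ifs <;> simp

end spectral

section embed

lemma wheel_of_list {V : Type*} {k : ℕ} (hk : 2 ≤ k) (G : SimpleGraph V) (u : V) (c : List V)
    (hlen : c.length = 2 * k) (hnd : c.Nodup) (hu : ∀ w ∈ c, G.Adj u w)
    (hch : c.IsChain G.Adj)
    (hcl : ∀ a ∈ c.head?, ∀ b ∈ c.getLast?, G.Adj a b) :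
    ContainsCopy (wheelGraph (2 * k + 1)) G := by
  have hl : (u :: c).length = 2 * k + 1 := by simp [hlen]
  have hnd' : (u :: c).Nodup := by
    rw [List.nodup_cons]
    exact ⟨fun h => G.loopless.irrefl u (hu u h), hnd⟩
  refine ⟨⟨fun i => (u :: c)[i.val]'(by rw [hl]; exact i.isLt), ?_⟩, ?_⟩
  · intro i j hij
    exact Fin.ext ((List.Nodup.getElem_inj_iff hnd').1 hij)
  · have hub : ∀ (a b : Fin (2 * k + 1)), a.val = 0 → b.val ≠ 0 →
        G.Adj ((u :: c)[a.val]'(by rw [hl]; exact a.isLt))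
          ((u :: c)[b.val]'(by rw [hl]; exact b.isLt)) := by
      intro a b ha hb
      obtain ⟨m, hm⟩ := Nat.exists_eq_succ_of_ne_zero hb
      simp only [ha, hm, List.getElem_cons_zero, List.getElem_cons_succ, Nat.succ_eq_add_one]
      exact hu _ (List.getElem_mem _)
    have hstep : ∀ (a b : Fin (2 * k + 1)), a.val ≠ 0 → a.val + 1 = b.val →
        G.Adj ((u :: c)[a.val]'(by rw [hl]; exact a.isLt))
          ((u :: c)[b.val]'(by rw [hl]; exact b.isLt)) := by
      intro a b ha hab
      obtain ⟨m, hm⟩ := Nat.exists_eq_succ_of_ne_zero ha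
      have hb : b.val = m + 1 + 1 := by omega
      have hbl := b.isLt
      simp only [hb, hm, List.getElem_cons_succ, Nat.succ_eq_add_one]
      exact List.isChain_iff_getElem.1 hch m (by omega)
    have hclose : ∀ (a b : Fin (2 * k + 1)), a.val = 1 → b.val = 2 * k →
        G.Adj ((u :: c)[a.val]'(by rw [hl]; exact a.isLt))
          ((u :: c)[b.val]'(by rw [hl]; exact b.isLt)) := by
      intro a b ha hb
      obtain ⟨m, hm⟩ : ∃ m, 2 * k = m + 1 := ⟨2 * k - 1, by omega⟩
      have hb' : b.val = m + 1 := by omega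
      simp only [ha, hb', List.getElem_cons_succ]
      apply hcl
      · rw [List.head?_eq_getElem?, List.getElem?_eq_getElem (by omega)]; rfl
      · have : m = c.length - 1 := by omega
        rw [List.getLast?_eq_getElem?, ← this, List.getElem?_eq_getElem (by omega)]; rfl
    intro a b hab
    obtain ⟨hne, h⟩ := hab
    have hne' : a.val ≠ b.val := fun h => hne (Fin.ext h)
    show G.Adj ((u :: c)[a.val]'(by rw [hl]; exact a.isLt))
          ((u :: c)[b.val]'(by rw [hl]; exact b.isLt))
    by_cases ha : a.val = 0
    · exact hub a b ha (by omega)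
    by_cases hb : b.val = 0
    · exact (hub b a hb ha).symm
    rcases h with h | h | h | h | h | h
    · exact absurd h ha
    · exact absurd h hb
    · exact hstep a b ha h
    · exact (hstep b a hb h).symm
    · exact hclose a b h.1 (by omega)
    · exact (hclose b a h.1 (by omega)).symm

lemma pieces_chain {V : Type*} (G : SimpleGraph V) (S T : V → Prop)
    (hST : ∀ s t, S s → T t → G.Adj s t) (l : List (V × List V))
    (h : ∀ p ∈ l, S p.1 ∧ p.2 ≠ [] ∧ (∀ t ∈ p.2, T t) ∧ p.2.IsChain G.Adj) :
    (l.flatMap (fun p => p.1 :: p.2)).IsChain G.Adj ∧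
    (∀ a ∈ (l.flatMap (fun p => p.1 :: p.2)).head?, S a) ∧
    (∀ b ∈ (l.flatMap (fun p => p.1 :: p.2)).getLast?, T b) := by
  induction l with
  | nil => simp
  | cons p l ih =>
    obtain ⟨i1, i2, i3⟩ := ih (fun q hq => h q (List.mem_cons_of_mem _ hq))
    obtain ⟨s1, s2, s3, s4⟩ := h p List.mem_cons_self
    rw [List.flatMap_cons]
    set r := l.flatMap (fun p => p.1 :: p.2) with hr
    have hlast : ∀ b ∈ (p.1 :: p.2).getLast?, T b := by
      intro b hb
      rw [List.getLast?_cons] at hb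
      obtain ⟨y, hy⟩ := Option.ne_none_iff_exists'.1 (mt List.getLast?_eq_none_iff.1 s2)
      rw [hy] at hb
      simp at hb
      subst hb
      exact s3 _ (List.mem_of_getLast? hy)
    refine ⟨?_, ?_, ?_⟩
    · rw [List.isChain_append]
      refine ⟨?_, i1, ?_⟩
      · rw [List.isChain_cons]
        refine ⟨fun y hy => hST _ _ s1 (s3 _ (List.mem_of_head? hy)), s4⟩
      · intro a ha b hb
        exact (hST _ _ (i2 b hb) (hlast a ha)).symm
    · intro a ha
      simp at ha
      rw [← ha]; exact s1
    · intro b hb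
      rw [List.getLast?_append] at hb
      cases hrl : r.getLast? with
      | none => rw [hrl] at hb; simp only [Option.none_or] at hb; exact hlast b hb
      | some y =>
        rw [hrl] at hb
        simp at hb
        exact i3 b (by rw [hrl, hb]; rfl)

lemma zip_perm {V : Type*} (a : List V) (Q : List (List V)) (h : a.length = Q.length) :
    ((a.zip Q).flatMap (fun p => p.1 :: p.2)).Perm (a ++ Q.flatten) := by
  induction a generalizing Q with
  | nil => cases Q with
    | nil => simp
    | cons q Q => simp at h
  | cons s a ih => cases Q with
    | nil => simp at h
    | cons q Q =>
      have := ih Q (by simpa using h)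
      simp only [List.zip_cons_cons, List.flatMap_cons, List.flatten_cons, List.cons_append]
      refine List.Perm.cons _ ?_
      refine (List.Perm.append_left q this).trans ?_
      rw [← List.append_assoc, ← List.append_assoc]
      exact List.Perm.append_right _ List.perm_append_comm

lemma wheel_of_forest {V : Type*} {k : ℕ} (hk : 2 ≤ k) (G : SimpleGraph V)
    (u : V) (S C : Finset V) (hS : ∀ s ∈ S, G.Adj u s) (hC : ∀ c ∈ C, G.Adj u c)
    (hSC : ∀ s ∈ S, ∀ c ∈ C, G.Adj s c) (Q : List (List V)) (hQnd : Q.flatten.Nodup)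
    (hQ : ∀ q ∈ Q, q ≠ [] ∧ q.IsChain G.Adj ∧ ∀ t ∈ q, t ∈ C) (hlen : Q.length ≤ S.card)
    (htot : Q.flatten.length + (S.card - Q.length) + S.card = 2 * k) (hCk : 2 * k ≤ C.card) :
    ContainsCopy (wheelGraph (2 * k + 1)) G := by
  classical
  have hcard : S.card - Q.length ≤ (C \ Q.flatten.toFinset).card := by
    have h1 := Finset.le_card_sdiff Q.flatten.toFinset C
    have h2 := List.toFinset_card_le Q.flatten
    omega
  obtain ⟨F, hF, hFc⟩ := Finset.exists_subset_card_eq hcard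
  set Q' := Q ++ F.toList.map (fun t => [t]) with hQ'
  have hfl : Q'.flatten = Q.flatten ++ F.toList := by
    have h1 : ∀ l : List V, (l.map (fun t => [t])).flatten = l := by
      intro l
      induction l with
      | nil => rfl
      | cons a l ih => rw [List.map_cons, List.flatten_cons, ih]; rfl
    rw [hQ', List.flatten_append, h1]
  have hl' : S.toList.length = Q'.length := by
    simp [hQ', hFc]; omega
  have hperm := zip_perm S.toList Q' hl'
  have hQ'p : ∀ q ∈ Q', q ≠ [] ∧ (∀ t ∈ q, t ∈ C) ∧ q.IsChain G.Adj := by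
    intro q hq
    rw [hQ', List.mem_append] at hq
    rcases hq with hq | hq
    · exact ⟨(hQ q hq).1, (hQ q hq).2.2, (hQ q hq).2.1⟩
    · rw [List.mem_map] at hq
      obtain ⟨t, ht, rfl⟩ := hq
      have := hF (Finset.mem_toList.1 ht)
      rw [Finset.mem_sdiff] at this
      simpa using this.1
  have hflC : ∀ t ∈ Q'.flatten, t ∈ C := by
    intro t ht
    rw [List.mem_flatten] at ht
    obtain ⟨q, hq, htq⟩ := ht
    exact (hQ'p q hq).2.1 t htq
  have hch := pieces_chain G (· ∈ S) (· ∈ C) (fun s t hs ht => hSC s hs t ht) (S.toList.zip Q')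
    (by
      intro p hp
      have h1 := List.of_mem_zip hp
      exact ⟨Finset.mem_toList.1 h1.1, hQ'p _ h1.2⟩)
  obtain ⟨c1, c2, c3⟩ := hch
  refine wheel_of_list hk G u _ ?_ ?_ ?_ c1 ?_
  · rw [hperm.length_eq, hfl]
    simp only [List.length_append, Finset.length_toList, hFc]
    omega
  · rw [hperm.nodup_iff, List.nodup_append]
    refine ⟨S.nodup_toList, ?_, ?_⟩
    · rw [hfl, List.nodup_append]
      refine ⟨hQnd, F.nodup_toList, ?_⟩
      rintro a ha b hb rfl
      have := hF (Finset.mem_toList.1 hb)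
      rw [Finset.mem_sdiff, List.mem_toFinset] at this
      exact this.2 ha
    · rintro a ha b hb rfl
      exact G.loopless.irrefl a (hSC a (Finset.mem_toList.1 ha) a (hflC a hb))
  · intro w hw
    rw [hperm.mem_iff, List.mem_append] at hw
    rcases hw with hw | hw
    · exact hS w (Finset.mem_toList.1 hw)
    · exact hC w (hflC w hw)
  · intro a ha b hb
    exact hSC a (c2 a ha) b (c3 b hb)

end embed

section kst
open Classical

/-- Neighbourhood as a finset. -/
noncomputable def nb {V : Type*} [Fintype V] (G : SimpleGraph V) (v : V) : Finset V :=
  Finset.univ.filter (fun w => G.Adj v w)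

lemma mem_nb {V : Type*} [Fintype V] {G : SimpleGraph V} {v w : V} : w ∈ nb G v ↔ G.Adj v w := by
  simp [nb]

lemma kst {k : ℕ} (hk : 2 ≤ k) {η : ℝ} (hη : 0 < η) :
    ∃ n0 : ℕ, ∀ n ≥ n0, ∀ (G : SimpleGraph (Fin n)) (A : Finset (Fin n)),
      η * (n : ℝ) ^ 2 < ∑ v ∈ A, ((A ∩ nb G v).card : ℝ) →
      ∃ S C : Finset (Fin n), S ⊆ A ∧ C ⊆ A ∧ S.card = k ∧ 2 * k ≤ C.card ∧
        ∀ s ∈ S, ∀ c ∈ C, G.Adj s c := by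
  obtain ⟨n0, hn0⟩ := exists_nat_gt (max (4 * k / η) (4 * k / η * (4 / η) ^ k))
  refine ⟨n0 + 1, fun n hn G A hA => ?_⟩
  have hnr : max (4 * k / η) (4 * k / η * (4 / η) ^ k) < n := by
    refine hn0.trans ?_
    exact_mod_cast (by omega : n0 < n)
  have hn1 : 4 * k / η < n := (le_max_left _ _).trans_lt hnr
  have hn2 : 4 * k / η * (4 / η) ^ k < n := (le_max_right _ _).trans_lt hnr
  have hnpos : (0 : ℝ) < n := by
    have : (0 : ℝ) ≤ 4 * k / η := by positivity
    linarith
  by_contra hcon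
  push Not at hcon
  set T := A.filter (fun v => η * n / 2 ≤ ((A ∩ nb G v).card : ℝ)) with hT
  have hcardA : (A.card : ℝ) ≤ n := by
    have := Finset.card_le_univ A
    rw [Fintype.card_fin] at this
    exact_mod_cast this
  have hTcard : η * n / 2 ≤ (T.card : ℝ) := by
    have h1 : ∑ v ∈ A, ((A ∩ nb G v).card : ℝ) ≤
        ∑ v ∈ A, ((if η * n / 2 ≤ ((A ∩ nb G v).card : ℝ) then (n : ℝ) else 0) + η * n / 2) := by
      refine Finset.sum_le_sum fun v _ => ?_
      have h2 : ((A ∩ nb G v).card : ℝ) ≤ n := by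
        have := Finset.card_le_univ (A ∩ nb G v)
        rw [Fintype.card_fin] at this
        exact_mod_cast this
      have : 0 ≤ η * n / 2 := by positivity
      split_ifs with h
      · linarith
      · push Not at h; linarith
    rw [Finset.sum_add_distrib, ← Finset.sum_filter, Finset.sum_const, Finset.sum_const,
      nsmul_eq_mul, nsmul_eq_mul] at h1
    have h3 : (A.card : ℝ) * (η * n / 2) ≤ n * (η * n / 2) :=
      mul_le_mul_of_nonneg_right hcardA (by positivity)
    have h4 : η * (n : ℝ) ^ 2 < T.card * n + n * (η * n / 2) := by linarith
    by_contra h5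
    push Not at h5
    have := mul_lt_mul_of_pos_right h5 hnpos
    nlinarith
  -- double counting
  have hdc : ∑ v ∈ T, ((A ∩ nb G v).card.choose k) ≤ n.choose k * (2 * k) := by
    have h1 : ∑ v ∈ T, ((A ∩ nb G v).card.choose k) =
        ∑ v ∈ T, (((Finset.univ : Finset (Fin n)).powersetCard k).filter
          (fun S => S ⊆ A ∩ nb G v)).card := by
      refine Finset.sum_congr rfl fun v _ => ?_
      rw [← Finset.card_powersetCard]
      congr 1
      ext S
      simp [Finset.mem_powersetCard, and_comm]
    have h2 := Finset.sum_card_bipartiteAbove_eq_sum_card_bipartiteBelow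
      (s := T) (t := (Finset.univ : Finset (Fin n)).powersetCard k)
      (fun v S => S ⊆ A ∩ nb G v)
    rw [h1]
    unfold Finset.bipartiteAbove Finset.bipartiteBelow at h2
    rw [h2]
    refine (Finset.sum_le_card_nsmul _ _ (2 * k) ?_).trans ?_
    · intro S hS
      rw [Finset.mem_powersetCard] at hS
      by_contra hlt
      push Not at hlt
      have hSne : S.Nonempty := by
        rw [← Finset.card_pos]; omega
      set C := T.filter (fun v => S ⊆ A ∩ nb G v) with hC
      have hSA : S ⊆ A := by
        have : C.Nonempty := by rw [← Finset.card_pos]; omega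
        obtain ⟨v, hv⟩ := this
        rw [hC, Finset.mem_filter] at hv
        exact hv.2.trans Finset.inter_subset_left
      obtain ⟨s, hs, c, hc, hsc⟩ := hcon S C hSA
        ((Finset.filter_subset _ _).trans (Finset.filter_subset _ _)) hS.2 hlt.le
      apply hsc
      rw [hC, Finset.mem_filter] at hc
      have := hc.2 hs
      rw [Finset.mem_inter, mem_nb] at this
      exact this.2.symm
    · rw [Finset.card_powersetCard, Finset.card_fin, smul_eq_mul]
  have hkn : (k : ℝ) ≤ η * n / 4 := by
    rw [div_lt_iff₀ hη] at hn1
    linarith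
  have hlow : ∀ v ∈ T, (η * n / 4) ^ k ≤ (k.factorial : ℝ) * ((A ∩ nb G v).card.choose k : ℝ) := by
    intro v hv
    have hd : η * n / 2 ≤ ((A ∩ nb G v).card : ℝ) := (Finset.mem_filter.1 hv).2
    set d := (A ∩ nb G v).card
    have h1 := Nat.pow_sub_le_descFactorial d k
    rw [Nat.descFactorial_eq_factorial_mul_choose] at h1
    have h1' : ((d + 1 - k : ℕ) : ℝ) ^ k ≤ (k.factorial : ℝ) * (d.choose k : ℝ) := by
      exact_mod_cast h1
    refine le_trans ?_ h1'
    refine pow_le_pow_left₀ (by positivity) ?_ k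
    have hkd : k ≤ d + 1 := by
      have : (k : ℝ) ≤ d := by linarith
      have : k ≤ d := by exact_mod_cast this
      omega
    rw [Nat.cast_sub hkd]
    push_cast
    linarith
  have hup : (n.choose k : ℝ) * k.factorial ≤ (n : ℝ) ^ k := by
    have h1 := Nat.descFactorial_le_pow n k
    rw [Nat.descFactorial_eq_factorial_mul_choose] at h1
    rw [mul_comm]
    exact_mod_cast h1
  have hfin : (T.card : ℝ) * (η * n / 4) ^ k ≤ 2 * k * (n : ℝ) ^ k := by
    calc (T.card : ℝ) * (η * n / 4) ^ k = ∑ v ∈ T, (η * n / 4) ^ k := by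
          rw [Finset.sum_const, nsmul_eq_mul]
      _ ≤ ∑ v ∈ T, (k.factorial : ℝ) * ((A ∩ nb G v).card.choose k : ℝ) := Finset.sum_le_sum hlow
      _ = k.factorial * ((∑ v ∈ T, ((A ∩ nb G v).card.choose k) : ℕ) : ℝ) := by
          push_cast; rw [Finset.mul_sum]
      _ ≤ k.factorial * ((n.choose k * (2 * k) : ℕ) : ℝ) := by
          refine mul_le_mul_of_nonneg_left ?_ (by positivity)
          exact_mod_cast hdc
      _ = (n.choose k : ℝ) * k.factorial * (2 * k) := by push_cast; ring
      _ ≤ (n : ℝ) ^ k * (2 * k) := mul_le_mul_of_nonneg_right hup (by positivity)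
      _ = _ := by ring
  have h5 : (η * n / 2) * (η * n / 4) ^ k ≤ 2 * k * (n : ℝ) ^ k :=
    (mul_le_mul_of_nonneg_right hTcard (by positivity)).trans hfin
  have h6 : (η * n / 4) ^ k = (η / 4) ^ k * (n : ℝ) ^ k := by
    rw [← mul_pow]; congr 1; ring
  rw [h6] at h5
  have hnk : (0 : ℝ) < (n : ℝ) ^ k := by positivity
  have h7 : (η * n / 2) * (η / 4) ^ k ≤ 2 * k := by
    have : (η * n / 2) * (η / 4) ^ k * (n : ℝ) ^ k ≤ 2 * k * (n : ℝ) ^ k := by linarith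
    exact le_of_mul_le_mul_right this hnk
  have h8 : (4 / η) ^ k * (η / 4) ^ k = 1 := by
    rw [← mul_pow]
    have : 4 / η * (η / 4) = 1 := by field_simp
    rw [this, one_pow]
  have h9 : 4 * k / η * (4 / η) ^ k * ((η / 4) ^ k * (η / 2)) < n * ((η / 4) ^ k * (η / 2)) :=
    mul_lt_mul_of_pos_right hn2 (by positivity)
  have h10 : 4 * k / η * (4 / η) ^ k * ((η / 4) ^ k * (η / 2)) = 2 * k := by
    calc 4 * k / η * (4 / η) ^ k * ((η / 4) ^ k * (η / 2))
        = 4 * k / η * ((4 / η) ^ k * (η / 4) ^ k) * (η / 2) := by ring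
      _ = 2 * k := by rw [h8]; field_simp; ring
  nlinarith

lemma nbhd_sparse {k : ℕ} (hk : 2 ≤ k) {η : ℝ} (hη : 0 < η) :
    ∃ n0 : ℕ, ∀ n ≥ n0, ∀ (G : SimpleGraph (Fin n)), WheelFree (2 * k + 1) G → ∀ u,
      ∑ v ∈ nb G u, ((nb G u ∩ nb G v).card : ℝ) ≤ η * (n : ℝ) ^ 2 := by
  obtain ⟨n0, h⟩ := kst hk hη
  refine ⟨n0, fun n hn G hG u => ?_⟩
  by_contra hcon
  push Not at hcon
  obtain ⟨S, C, hS, hC, hSk, hCk, hSC⟩ := h n hn G _ hcon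
  apply hG
  refine wheel_of_forest hk G u S C (fun s hs => mem_nb.1 (hS hs)) (fun c hc => mem_nb.1 (hC hc))
    hSC [] (by simp) (by simp) (by simp) ?_ hCk
  simp [hSk]; omega

end kst

section replace
open Classical

lemma qf_split {V : Type*} [Fintype V] [DecidableEq V] (G : SimpleGraph V) (x : V → ℝ) (v : V) :
    qf G x = (∑ p ∈ Finset.univ.erase v, ∑ q ∈ Finset.univ.erase v,
      if G.Adj p q then x p * x q else 0) + 2 * (x v * nsum G x v) := by
  have hrow : (∑ q, if G.Adj v q then x v * x q else 0) = x v * nsum G x v := by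
    unfold nsum
    rw [Finset.mul_sum]
    refine Finset.sum_congr rfl fun w _ => ?_
    split_ifs <;> simp
  have hcol : (∑ p ∈ Finset.univ.erase v, if G.Adj p v then x p * x v else 0)
      = x v * nsum G x v := by
    rw [← hrow, ← Finset.sum_erase_add _ _ (Finset.mem_univ v)]
    rw [if_neg (G.loopless.irrefl v), add_zero]
    refine Finset.sum_congr rfl fun w _ => ?_
    simp only [G.adj_comm w v, mul_comm (x w)]
  unfold qf
  rw [← Finset.sum_erase_add _ _ (Finset.mem_univ v), hrow]
  have : ∀ p ∈ Finset.univ.erase v, (∑ q, if G.Adj p q then x p * x q else 0) =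
      (∑ q ∈ Finset.univ.erase v, if G.Adj p q then x p * x q else 0)
        + if G.Adj p v then x p * x v else 0 := by
    intro p _
    rw [Finset.sum_erase_add _ _ (Finset.mem_univ v)]
  rw [Finset.sum_congr rfl this, Finset.sum_add_distrib, hcol]
  ring

/-- The graph obtained from `G` by making `v` adjacent exactly to `B`. -/
def replGraph {V : Type*} (G : SimpleGraph V) (v : V) (B : Finset V) : SimpleGraph V where
  Adj p q := p ≠ q ∧ ((p ≠ v ∧ q ≠ v ∧ G.Adj p q) ∨ (p = v ∧ q ∈ B) ∨ (q = v ∧ p ∈ B))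
  symm := by
    constructor
    intro p q h
    refine ⟨h.1.symm, ?_⟩
    rcases h.2 with h | h | h
    · exact Or.inl ⟨h.2.1, h.1, h.2.2.symm⟩
    · exact Or.inr (Or.inr h)
    · exact Or.inr (Or.inl h)
  loopless := by
    constructor
    intro p h
    exact h.1 rfl

lemma repl_free {n k : ℕ} (G : SimpleGraph (Fin n)) (hG : WheelFree (2 * k + 1) G) (v : Fin n)
    (B : Finset (Fin n)) (hv : v ∉ B)
    (hB : ∀ X : Finset (Fin n), X.card ≤ 2 * k + 1 → ∃ w, w ∉ X ∧ ∀ p ∈ X, p ∈ B → G.Adj p w) :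
    WheelFree (2 * k + 1) (replGraph G v B) := by
  rintro ⟨f, hf⟩
  apply hG
  by_cases hex : ∃ i, f i = v
  · obtain ⟨i, hi⟩ := hex
    obtain ⟨w, hw, hwp⟩ := hB (Finset.univ.map f) (by simp)
    have hw' : ∀ j, f j ≠ w := by
      intro j hj
      apply hw
      rw [← hj]
      simp
    refine ⟨⟨fun j => if j = i then w else f j, ?_⟩, ?_⟩
    · intro a b hab
      simp only at hab
      split_ifs at hab with h1 h2 h2
      · rw [h1, h2]
      · exact absurd hab.symm (hw' b)
      · exact absurd hab (hw' a)
      · exact f.injective hab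
    · intro a b hab
      have h := hf a b hab
      have hne : ∀ j, j ≠ i → f j ≠ v := by
        intro j hj hjv
        exact hj (f.injective (hjv.trans hi.symm))
      show G.Adj (if a = i then w else f a) (if b = i then w else f b)
      split_ifs with h1 h2 h2
      · exact absurd (h1.trans h2.symm) hab.1
      · rw [h1, hi] at h
        rcases h.2 with h | h | h
        · exact absurd rfl h.1
        · exact (hwp _ (by simp) h.2).symm
        · exact absurd h.2 hv
      · rw [h2, hi] at h
        rcases h.2 with h | h | h
        · exact absurd rfl h.2.1
        · exact absurd h.2 hv
        · exact hwp _ (by simp) h.2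
      · rcases h.2 with h | h | h
        · exact h.2.2
        · exact absurd h.1 (hne a h1)
        · exact absurd h.1 (hne b h2)
  · push Not at hex
    refine ⟨f, fun a b hab => ?_⟩
    rcases (hf a b hab).2 with h | h | h
    · exact h.2.2
    · exact absurd h.1 (hex a)
    · exact absurd h.1 (hex b)

lemma repl_bound {n k : ℕ} (G : SimpleGraph (Fin n)) (hG : IsSpexWheel (2 * k + 1) G)
    (hl : 0 < lam1 G) (x : Fin n → ℝ) (hx0 : ∀ v, 0 ≤ x v)
    (hx : ∀ v, nsum G x v = lam1 G * x v) (v : Fin n)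
    (B : Finset (Fin n)) (hv : v ∉ B)
    (hB : ∀ X : Finset (Fin n), X.card ≤ 2 * k + 1 → ∃ w, w ∉ X ∧ ∀ p ∈ X, p ∈ B → G.Adj p w) :
    ∑ w ∈ B, x w ≤ lam1 G * x v := by
  set H := replGraph G v B with hH
  set s := (∑ w ∈ B, x w) / lam1 G with hs
  set y := Function.update x v s with hy
  have hHl : lam1 H ≤ lam1 G := hG.2 H (repl_free G hG.1 v B hv hB)
  have hyv : y v = s := by simp [hy]
  have hyn : ∀ w, w ≠ v → y w = x w := by intro w hw; simp [hy, hw]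
  have hns : nsum H y v = ∑ w ∈ B, x w := by
    unfold nsum
    rw [← Finset.sum_filter]
    have : (Finset.univ.filter (fun w => H.Adj v w)) = B := by
      ext w
      simp only [Finset.mem_filter, Finset.mem_univ, true_and]
      constructor
      · intro h
        rcases h.2 with h | h | h
        · exact absurd rfl h.1
        · exact h.2
        · exact absurd h.2 hv
      · intro h
        refine ⟨?_, Or.inr (Or.inl ⟨rfl, h⟩)⟩
        rintro rfl; exact hv h
    rw [this]
    refine Finset.sum_congr rfl fun w hw => hyn w ?_
    rintro rfl; exact hv hw
  have hZ : (∑ p ∈ Finset.univ.erase v, ∑ q ∈ Finset.univ.erase v,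
      if H.Adj p q then y p * y q else 0) = ∑ p ∈ Finset.univ.erase v, ∑ q ∈ Finset.univ.erase v,
      if G.Adj p q then x p * x q else 0 := by
    refine Finset.sum_congr rfl fun p hp => Finset.sum_congr rfl fun q hq => ?_
    have hp' := Finset.ne_of_mem_erase hp
    have hq' := Finset.ne_of_mem_erase hq
    rw [hyn p hp', hyn q hq']
    have : H.Adj p q ↔ G.Adj p q := by
      constructor
      · intro h
        rcases h.2 with h | h | h
        · exact h.2.2
        · exact absurd h.1 hp'
        · exact absurd h.1 hq'
      · intro h
        exact ⟨h.ne, Or.inl ⟨hp', hq', h⟩⟩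
    simp only [this]
  have h1 := qf_split G x v
  have h2 := qf_split H y v
  rw [hZ, hyv, hns] at h2
  have h3 := qf_le H y
  have h4 : ∑ w, y w ^ 2 = (∑ w ∈ Finset.univ.erase v, x w ^ 2) + s ^ 2 := by
    rw [← Finset.sum_erase_add _ _ (Finset.mem_univ v), hyv]
    congr 1
    refine Finset.sum_congr rfl fun w hw => ?_
    rw [hyn w (Finset.ne_of_mem_erase hw)]
  have h5 : qf G x = lam1 G * ((∑ w ∈ Finset.univ.erase v, x w ^ 2) + x v ^ 2) := by
    rw [Finset.sum_erase_add _ _ (Finset.mem_univ v), qf_eq_nsum, Finset.mul_sum]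
    refine Finset.sum_congr rfl fun w _ => ?_
    rw [hx]; ring
  rw [hx v] at h1
  have h6 : qf H y ≤ lam1 G * ∑ w, y w ^ 2 :=
    h3.trans (mul_le_mul_of_nonneg_right hHl (Finset.sum_nonneg fun w _ => sq_nonneg _))
  rw [h4, h2] at h6
  set S := ∑ w ∈ B, x w with hS
  have hsS : lam1 G * s = S := by rw [hs]; field_simp
  have hs0 : 0 ≤ s := div_nonneg (Finset.sum_nonneg fun w _ => hx0 w) hl.le
  have h7 : lam1 G * s ^ 2 ≤ lam1 G * x v ^ 2 := by
    rw [← hsS] at h6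
    nlinarith
  have h8 : s ^ 2 ≤ x v ^ 2 := le_of_mul_le_mul_left h7 hl
  have h9 : s ≤ x v := abs_le_of_sq_le_sq' h8 (hx0 v) |>.2
  rw [← hsS]
  exact mul_le_mul_of_nonneg_left h9 hl.le

end replace

section structure1
open Classical

lemma nsum_eq_nb {V : Type*} [Fintype V] (G : SimpleGraph V) (x : V → ℝ) (v : V) :
    nsum G x v = ∑ w ∈ nb G v, x w := by
  unfold nsum nb
  rw [Finset.sum_filter]

lemma near_bip {n : ℕ} (G : SimpleGraph (Fin n)) {ε : ℝ} (hε : 0 < ε)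
    (hε2 : ε < 1 / 4) (hn : 0 < n)
    (hsp : ∀ u, ∑ v ∈ nb G u, ((nb G u ∩ nb G v).card : ℝ) ≤ ε ^ 2 * (n : ℝ) ^ 2)
    (hl : (n : ℝ) / 2 ≤ lam1 G) (x : Fin n → ℝ) (hx0 : ∀ v, 0 ≤ x v) (hx1 : ∀ v, x v ≤ 1)
    (u : Fin n) (hu : x u = 1) (hx : ∀ v, nsum G x v = lam1 G * x v) :
    lam1 G ≤ (1 / 2 + ε) * n ∧ ∃ A : Finset (Fin n),
      (1 / 2 - ε) * n ≤ A.card ∧ (1 / 2 - ε) * n ≤ (Aᶜ).card ∧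
      ∑ v ∈ A, ((Aᶜ \ nb G v).card : ℝ) ≤ ε ^ 2 * (n : ℝ) ^ 2 ∧
      (1 / 2 - ε) * n ≤ ∑ w ∈ Aᶜ, x w := by
  set A := nb G u with hA
  have hnpos : (0 : ℝ) < n := by exact_mod_cast hn
  have hab : (A.card : ℝ) + (Aᶜ).card = n := by
    have := Finset.card_add_card_compl A
    rw [Fintype.card_fin] at this
    exact_mod_cast this
  set P := ∑ v ∈ A, ∑ w ∈ Aᶜ ∩ nb G v, x w with hP
  have h1 : lam1 G ^ 2 ≤ ε ^ 2 * (n : ℝ) ^ 2 + P := by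
    have e1 : lam1 G = ∑ v ∈ A, x v := by
      rw [hA, ← nsum_eq_nb, hx u, hu, mul_one]
    calc lam1 G ^ 2 = lam1 G * ∑ v ∈ A, x v := by rw [← e1]; ring
      _ = ∑ v ∈ A, nsum G x v := by
          rw [Finset.mul_sum]; exact Finset.sum_congr rfl fun v _ => (hx v).symm
      _ = ∑ v ∈ A, (∑ w ∈ A ∩ nb G v, x w + ∑ w ∈ Aᶜ ∩ nb G v, x w) := by
          refine Finset.sum_congr rfl fun v _ => ?_
          rw [nsum_eq_nb, ← Finset.sum_inter_add_sum_sdiff (nb G v) A]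
          congr 1
          · rw [Finset.inter_comm]
          · congr 1
            ext w; simp [and_comm]
      _ ≤ ∑ v ∈ A, (((A ∩ nb G v).card : ℝ) + ∑ w ∈ Aᶜ ∩ nb G v, x w) := by
          refine Finset.sum_le_sum fun v _ => ?_
          have : ∑ w ∈ A ∩ nb G v, x w ≤ ∑ w ∈ A ∩ nb G v, (1 : ℝ) :=
            Finset.sum_le_sum fun w _ => hx1 w
          rw [Finset.sum_const, nsmul_eq_mul, mul_one] at this
          linarith
      _ ≤ ε ^ 2 * (n : ℝ) ^ 2 + P := by
          rw [Finset.sum_add_distrib]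
          have := hsp u
          linarith
  have hl2 : (n : ℝ) ^ 2 / 4 ≤ lam1 G ^ 2 := by nlinarith
  have hP1 : P ≤ (A.card : ℝ) * (Aᶜ).card - ∑ v ∈ A, ((Aᶜ \ nb G v).card : ℝ) := by
    have : P ≤ ∑ v ∈ A, (((Aᶜ).card : ℝ) - ((Aᶜ \ nb G v).card : ℝ)) := by
      refine Finset.sum_le_sum fun v _ => ?_
      have h2 : ∑ w ∈ Aᶜ ∩ nb G v, x w ≤ ∑ w ∈ Aᶜ ∩ nb G v, (1 : ℝ) :=
        Finset.sum_le_sum fun w _ => hx1 w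
      rw [Finset.sum_const, nsmul_eq_mul, mul_one] at h2
      have h3 := Finset.card_inter_add_card_sdiff (Aᶜ) (nb G v)
      have h4 : ((Aᶜ ∩ nb G v).card : ℝ) + (Aᶜ \ nb G v).card = (Aᶜ).card := by exact_mod_cast h3
      linarith
    rw [Finset.sum_sub_distrib, Finset.sum_const, nsmul_eq_mul] at this
    exact this
  have hP2 : P ≤ A.card * ∑ w ∈ Aᶜ, x w := by
    have : P ≤ ∑ v ∈ A, ∑ w ∈ Aᶜ, x w := by
      refine Finset.sum_le_sum fun v _ => ?_
      exact Finset.sum_le_sum_of_subset_of_nonneg Finset.inter_subset_left fun w _ _ => hx0 w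
    rw [Finset.sum_const, nsmul_eq_mul] at this
    exact this
  have hmiss0 : 0 ≤ ∑ v ∈ A, ((Aᶜ \ nb G v).card : ℝ) := Finset.sum_nonneg fun v _ => by positivity
  set a : ℝ := (A.card : ℝ) with ha
  set b : ℝ := ((Aᶜ).card : ℝ) with hb
  have hab4 : 4 * (a * b) ≤ (n : ℝ) ^ 2 := by rw [← hab]; nlinarith [sq_nonneg (a - b)]
  have hdiff : (a - b) ^ 2 ≤ (2 * ε * n) ^ 2 := by
    have : (a - b) ^ 2 = (n : ℝ) ^ 2 - 4 * (a * b) := by rw [← hab]; ring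
    rw [this]
    nlinarith
  have hd := abs_le_of_sq_le_sq' hdiff (by positivity)
  have ha1 : (1 / 2 - ε) * n ≤ a := by linarith [hd.1]
  have ha2 : a ≤ (1 / 2 + ε) * n := by linarith [hd.2]
  refine ⟨?_, A, ha1, by linarith [hd.2], by linarith, ?_⟩
  · have : lam1 G ^ 2 ≤ ((1 / 2 + ε) * n) ^ 2 := by nlinarith [mul_pos hε (mul_pos hnpos hnpos)]
    exact (abs_le_of_sq_le_sq' this (by positivity)).2
  · by_contra hcon
    push Not at hcon
    have hapos : 0 < a := lt_of_lt_of_le (by apply mul_pos _ hnpos; linarith) ha1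
    have h5 : a * ∑ w ∈ Aᶜ, x w < a * ((1 / 2 - ε) * n) := mul_lt_mul_of_pos_left hcon hapos
    have h6 : a * ((1 / 2 - ε) * n) ≤ (1 / 2 + ε) * n * ((1 / 2 - ε) * n) :=
      mul_le_mul_of_nonneg_right ha2 (by apply mul_nonneg _ hnpos.le; linarith)
    nlinarith

lemma near_bip2 {n : ℕ} (G : SimpleGraph (Fin n)) {ε : ℝ} (hε : 0 < ε)
    (hn : 0 < n) (x : Fin n → ℝ) (hx1 : ∀ v, x v ≤ 1)
    (A : Finset (Fin n))
    (h1 : (1 / 2 - ε) * n ≤ A.card) (h2 : (1 / 2 - ε) * n ≤ (Aᶜ).card)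
    (h3 : ∑ v ∈ A, ((Aᶜ \ nb G v).card : ℝ) ≤ ε ^ 2 * (n : ℝ) ^ 2)
    (h4 : (1 / 2 - ε) * n ≤ ∑ w ∈ Aᶜ, x w) :
    ∃ A' B' : Finset (Fin n), Disjoint A' B' ∧ (1 / 2 - 2 * ε) * n ≤ A'.card ∧
      (1 / 2 - 2 * ε) * n ≤ B'.card ∧ (∀ v ∈ A', ((B' \ nb G v).card : ℝ) ≤ ε * n) ∧
      (∀ w ∈ B', ((A' \ nb G w).card : ℝ) ≤ ε * n) ∧
      (1 / 2 - 2 * ε) * n ≤ ∑ w ∈ B', x w := by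
  have hnpos : (0 : ℝ) < n := by exact_mod_cast hn
  have hsym : ∑ v ∈ A, ((Aᶜ \ nb G v).card : ℝ) = ∑ w ∈ Aᶜ, ((A \ nb G w).card : ℝ) := by
    have := Finset.sum_card_bipartiteAbove_eq_sum_card_bipartiteBelow
      (s := A) (t := Aᶜ) (fun v w => ¬ G.Adj v w)
    unfold Finset.bipartiteAbove Finset.bipartiteBelow at this
    have e1 : ∀ v, Aᶜ \ nb G v = Aᶜ.filter (fun w => ¬ G.Adj v w) := by
      intro v; ext w; simp [mem_nb]
    have e2 : ∀ w, A \ nb G w = A.filter (fun v => ¬ G.Adj v w) := by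
      intro v; ext w; simp [mem_nb, G.adj_comm]
    simp only [e1, e2]
    exact_mod_cast this
  have key : ∀ (s : Finset (Fin n)) (f : Fin n → ℝ), (∀ v, 0 ≤ f v) →
      ∑ v ∈ s, f v ≤ ε ^ 2 * (n : ℝ) ^ 2 →
      ((s.filter (fun v => ¬ f v ≤ ε * n)).card : ℝ) ≤ ε * n := by
    intro s f hf hs
    have e1 : ∑ v ∈ s.filter (fun v => ¬ f v ≤ ε * n), (ε * n) ≤ ∑ v ∈ s, f v := by
      refine le_trans (Finset.sum_le_sum (g := f) ?_)
        (Finset.sum_le_sum_of_subset_of_nonneg (Finset.filter_subset _ _) fun v _ _ => hf v)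
      intro v hv
      have := (Finset.mem_filter.1 hv).2
      push Not at this
      exact this.le
    rw [Finset.sum_const, nsmul_eq_mul] at e1
    have hpos : 0 < ε * n := by positivity
    have : ((s.filter (fun v => ¬ f v ≤ ε * n)).card : ℝ) * (ε * n) ≤ (ε * n) * (ε * n) := by
      nlinarith
    exact le_of_mul_le_mul_right this hpos
  have kA := key A (fun v => ((Aᶜ \ nb G v).card : ℝ)) (fun v => by positivity) h3
  have kB := key Aᶜ (fun w => ((A \ nb G w).card : ℝ)) (fun v => by positivity) (by rw [← hsym]; exact h3)
  set A' := A.filter (fun v => ((Aᶜ \ nb G v).card : ℝ) ≤ ε * n) with hA'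
  set B' := Aᶜ.filter (fun w => ((A \ nb G w).card : ℝ) ≤ ε * n) with hB'
  have cA := Finset.card_filter_add_card_filter_not (s := A) (fun v => ((Aᶜ \ nb G v).card : ℝ) ≤ ε * n)
  have cB := Finset.card_filter_add_card_filter_not (s := Aᶜ) (fun w => ((A \ nb G w).card : ℝ) ≤ ε * n)
  rw [← hA'] at cA
  rw [← hB'] at cB
  have cA' : (A'.card : ℝ) + (A.filter (fun v => ¬ ((Aᶜ \ nb G v).card : ℝ) ≤ ε * n)).card = A.card := by
    exact_mod_cast cA
  have cB' : (B'.card : ℝ) + (Aᶜ.filter (fun w => ¬ ((A \ nb G w).card : ℝ) ≤ ε * n)).card = Aᶜ.card := by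
    exact_mod_cast cB
  refine ⟨A', B', ?_, by linarith, by linarith, ?_, ?_, ?_⟩
  · exact Disjoint.mono (Finset.filter_subset _ _) (Finset.filter_subset _ _) disjoint_compl_right
  · intro v hv
    refine le_trans ?_ (Finset.mem_filter.1 hv).2
    exact_mod_cast Finset.card_le_card (Finset.sdiff_subset_sdiff (Finset.filter_subset _ _) le_rfl)
  · intro v hv
    refine le_trans ?_ (Finset.mem_filter.1 hv).2
    exact_mod_cast Finset.card_le_card (Finset.sdiff_subset_sdiff (Finset.filter_subset _ _) le_rfl)
  · have := Finset.sum_filter_add_sum_filter_not Aᶜ (fun w => ((A \ nb G w).card : ℝ) ≤ ε * n) x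
    rw [← hB'] at this
    have h5 : ∑ w ∈ Aᶜ.filter (fun w => ¬ ((A \ nb G w).card : ℝ) ≤ ε * n), x w ≤
        ∑ w ∈ Aᶜ.filter (fun w => ¬ ((A \ nb G w).card : ℝ) ≤ ε * n), (1 : ℝ) :=
      Finset.sum_le_sum fun w _ => hx1 w
    rw [Finset.sum_const, nsmul_eq_mul, mul_one] at h5
    linarith

end structure1

section structure2
open Classical

lemma common_card {n : ℕ} (G : SimpleGraph (Fin n)) (S D : Finset (Fin n)) (m : ℝ)
    (h : ∀ s ∈ S, ((D \ nb G s).card : ℝ) ≤ m) :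
    (D.card : ℝ) - S.card * m ≤ ((D.filter (fun d => ∀ s ∈ S, G.Adj s d)).card : ℝ) := by
  have h1 : D ⊆ D.filter (fun d => ∀ s ∈ S, G.Adj s d) ∪ S.biUnion (fun s => D \ nb G s) := by
    intro d hd
    rw [Finset.mem_union, Finset.mem_filter, Finset.mem_biUnion]
    by_cases hh : ∀ s ∈ S, G.Adj s d
    · exact Or.inl ⟨hd, hh⟩
    · push Not at hh
      obtain ⟨s, hs, hsd⟩ := hh
      exact Or.inr ⟨s, hs, by rw [Finset.mem_sdiff, mem_nb]; exact ⟨hd, hsd⟩⟩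
  have h2 := (Finset.card_le_card h1).trans (Finset.card_union_le _ _)
  have h3 : ((S.biUnion (fun s => D \ nb G s)).card : ℝ) ≤ S.card * m := by
    have e1 : ((S.biUnion (fun s => D \ nb G s)).card : ℝ) ≤ ∑ s ∈ S, ((D \ nb G s).card : ℝ) := by
      exact_mod_cast Finset.card_biUnion_le
    refine e1.trans ((Finset.sum_le_sum h).trans ?_)
    rw [Finset.sum_const, nsmul_eq_mul]
  have h4 : (D.card : ℝ) ≤ (D.filter (fun d => ∀ s ∈ S, G.Adj s d)).card
      + (S.biUnion (fun s => D \ nb G s)).card := by exact_mod_cast h2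
  linarith

/-- Missing cross pairs at `v`. -/
noncomputable def miss {n : ℕ} (G : SimpleGraph (Fin n)) (L : Finset (Fin n)) (v : Fin n) :
    Finset (Fin n) :=
  Finset.univ.filter (fun w => (w ∈ L ↔ v ∉ L) ∧ ¬ G.Adj v w)

lemma entries_lower {n k : ℕ} (G : SimpleGraph (Fin n)) (hG : IsSpexWheel (2 * k + 1) G)
    {ε : ℝ} (hε : 0 < ε) (hεk : 100 * (k + 1) * ε ≤ 1)
    (hn : 3 * k + 3 ≤ ε * n)
    (hl : (n : ℝ) / 2 ≤ lam1 G) (hl2 : lam1 G ≤ (1 / 2 + ε) * n)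
    (x : Fin n → ℝ) (hx0 : ∀ v, 0 ≤ x v) (hx1 : ∀ v, x v ≤ 1)
    (hx : ∀ v, nsum G x v = lam1 G * x v)
    (A' B' : Finset (Fin n))
    (h1 : (1 / 2 - 2 * ε) * n ≤ A'.card)
    (h4 : ∀ w ∈ B', ((A' \ nb G w).card : ℝ) ≤ ε * n)
    (h5 : (1 / 2 - 2 * ε) * n ≤ ∑ w ∈ B', x w) (v : Fin n) :
    1 - 8 * ε ≤ x v ∧ (1 / 2 - 3 * ε) * n ≤ (nb G v).card := by
  have hk0 : (0 : ℝ) ≤ k := by positivity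
  have hnpos : (0 : ℝ) < n := by
    by_contra hcon
    have : ε * n ≤ 0 := mul_nonpos_of_nonneg_of_nonpos hε.le (not_lt.1 hcon)
    linarith
  have hlpos : 0 < lam1 G := by linarith
  have hkn : 100 * (k + 1) * (ε * n) ≤ n := by
    have := mul_le_mul_of_nonneg_right hεk hnpos.le
    linarith
  have hb := repl_bound G hG hlpos x hx0 hx v (B'.erase v) (Finset.notMem_erase _ _) (by
    intro X hX
    have hX' : (X.card : ℝ) ≤ 2 * k + 1 := by exact_mod_cast hX
    have hc := common_card G (X ∩ B') A' (ε * n) (fun s hs => h4 s (Finset.mem_inter.1 hs).2)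
    have hXB : ((X ∩ B').card : ℝ) ≤ X.card := by
      exact_mod_cast Finset.card_le_card Finset.inter_subset_left
    have h6 : ((X ∩ B').card : ℝ) * (ε * n) ≤ (2 * k + 1) * (ε * n) :=
      mul_le_mul_of_nonneg_right (hXB.trans hX') (by positivity)
    have h7 : (X.card : ℝ) < (A'.filter (fun d => ∀ s ∈ X ∩ B', G.Adj s d)).card := by
      have : (0 : ℝ) ≤ k * (ε * n) := by positivity
      nlinarith
    have h8 : X.card < (A'.filter (fun d => ∀ s ∈ X ∩ B', G.Adj s d)).card := by exact_mod_cast h7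
    obtain ⟨w, hw, hwX⟩ := Finset.exists_mem_notMem_of_card_lt_card h8
    refine ⟨w, hwX, fun p hp hpB => ?_⟩
    exact (Finset.mem_filter.1 hw).2 p (Finset.mem_inter.2 ⟨hp, Finset.mem_of_mem_erase hpB⟩))
  have h9 : ∑ w ∈ B', x w ≤ ∑ w ∈ B'.erase v, x w + 1 := by
    by_cases hv : v ∈ B'
    · rw [← Finset.sum_erase_add _ _ hv]
      linarith [hx1 v]
    · rw [Finset.erase_eq_of_notMem hv]; linarith
  have h10 : (1 / 2 - 3 * ε) * n ≤ lam1 G * x v := by linarith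
  constructor
  · by_contra hcon
    push Not at hcon
    have e1 : lam1 G * x v < lam1 G * (1 - 8 * ε) := mul_lt_mul_of_pos_left hcon hlpos
    have e3 : 0 ≤ 1 - 8 * ε := by nlinarith
    have e2 : lam1 G * (1 - 8 * ε) ≤ (1 / 2 + ε) * n * (1 - 8 * ε) :=
      mul_le_mul_of_nonneg_right hl2 e3
    nlinarith [mul_pos hε (mul_pos hε hnpos)]
  · rw [← hx v, nsum_eq_nb] at h10
    refine h10.trans ?_
    have : ∑ w ∈ nb G v, x w ≤ ∑ w ∈ nb G v, (1 : ℝ) := Finset.sum_le_sum fun w _ => hx1 w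
    rw [Finset.sum_const, nsmul_eq_mul, mul_one] at this
    exact this

lemma partition_exists {n k : ℕ} (hk : 2 ≤ k) (G : SimpleGraph (Fin n))
    (hG : WheelFree (2 * k + 1) G)
    {ε : ℝ} (hε : 0 < ε) (hεk : 100 * (k + 1) * ε ≤ 1)
    (hn : 3 * k + 3 ≤ ε * n)
    (A' B' : Finset (Fin n)) (hdis : Disjoint A' B')
    (h1 : (1 / 2 - 2 * ε) * n ≤ A'.card) (h2 : (1 / 2 - 2 * ε) * n ≤ B'.card)
    (h3 : ∀ v ∈ A', ((B' \ nb G v).card : ℝ) ≤ ε * n)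
    (h4 : ∀ w ∈ B', ((A' \ nb G w).card : ℝ) ≤ ε * n)
    (hd : ∀ v, (1 / 2 - 3 * ε) * n ≤ (nb G v).card) :
    ∃ L : Finset (Fin n), (1 / 2 - 2 * ε) * n ≤ L.card ∧ (1 / 2 - 2 * ε) * n ≤ (Lᶜ).card ∧
      ∀ v, ((miss G L v).card : ℝ) ≤ (20 + k) * (ε * n) := by
  have hk0 : (0 : ℝ) ≤ k := by positivity
  have hnpos : (0 : ℝ) < n := by
    by_contra hcon
    have : ε * n ≤ 0 := mul_nonpos_of_nonneg_of_nonpos hε.le (not_lt.1 hcon)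
    linarith
  have hkn : 100 * (k + 1) * (ε * n) ≤ n := by
    have := mul_le_mul_of_nonneg_right hεk hnpos.le
    linarith
  set e := ε * n with he
  have hke : (0 : ℝ) ≤ k * e := by positivity
  have hdich : ∀ v, k ≤ (A' ∩ nb G v).card → ((B' ∩ nb G v).card : ℝ) < k * e + 2 * k := by
    intro v hv
    by_contra hcon
    push Not at hcon
    obtain ⟨S, hS, hSk⟩ := Finset.exists_subset_card_eq hv
    have hc := common_card G S (B' ∩ nb G v) e (by
      intro s hs
      refine le_trans ?_ (h3 s (Finset.mem_inter.1 (hS hs)).1)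
      exact_mod_cast Finset.card_le_card
        (Finset.sdiff_subset_sdiff Finset.inter_subset_left le_rfl))
    rw [hSk] at hc
    apply hG
    refine wheel_of_forest hk G v S ((B' ∩ nb G v).filter (fun d => ∀ s ∈ S, G.Adj s d))
      (fun s hs => mem_nb.1 (Finset.mem_inter.1 (hS hs)).2) ?_ ?_ [] (by simp) (by simp)
      (by simp) (by simp [hSk]; omega) ?_
    · intro c hc
      exact mem_nb.1 (Finset.mem_inter.1 (Finset.mem_filter.1 hc).1).2
    · intro s hs c hc
      exact (Finset.mem_filter.1 hc).2 s hs
    · have : (2 * k : ℝ) ≤ ((B' ∩ nb G v).filter (fun d => ∀ s ∈ S, G.Adj s d)).card := by linarith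
      exact_mod_cast this
  have hsplit : ∀ (D : Finset (Fin n)) v, (D.card : ℝ) = (D ∩ nb G v).card + (D \ nb G v).card := by
    intro D v
    exact_mod_cast (Finset.card_inter_add_card_sdiff D (nb G v)).symm
  set L := Finset.univ.filter (fun v => (A' ∩ nb G v).card < k) with hL
  have hAL : A' ⊆ L := by
    intro v hv
    rw [hL, Finset.mem_filter]
    refine ⟨Finset.mem_univ _, ?_⟩
    by_contra hcon
    have e1 := hdich v (not_lt.1 hcon)
    have e2 := h3 v hv
    have e3 := hsplit B' v
    nlinarith
  have hBL : B' ⊆ Lᶜ := by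
    intro v hv
    rw [Finset.mem_compl, hL, Finset.mem_filter]
    rintro ⟨-, hlt⟩
    have hlt' : ((A' ∩ nb G v).card : ℝ) < k := by exact_mod_cast hlt
    have e2 := h4 v hv
    have e3 := hsplit A' v
    nlinarith
  have cL : (A'.card : ℝ) ≤ L.card := by exact_mod_cast Finset.card_le_card hAL
  have cR : (B'.card : ℝ) ≤ (Lᶜ).card := by exact_mod_cast Finset.card_le_card hBL
  have hLR : (L.card : ℝ) + (Lᶜ).card = n := by
    have := Finset.card_add_card_compl L
    rw [Fintype.card_fin] at this
    exact_mod_cast this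
  refine ⟨L, h1.trans cL, h2.trans cR, fun v => ?_⟩
  have hdeg : ((nb G v).card : ℝ) ≤ (A' ∩ nb G v).card + (B' ∩ nb G v).card
      + (n - A'.card - B'.card) := by
    have e1 : nb G v ⊆ ((A' ∩ nb G v) ∪ (B' ∩ nb G v)) ∪ (A' ∪ B')ᶜ := by
      intro w hw
      simp only [Finset.mem_union, Finset.mem_inter, Finset.mem_compl]
      tauto
    have e2 := (Finset.card_le_card e1).trans (Finset.card_union_le _ _)
    have e3 := Finset.card_union_le (A' ∩ nb G v) (B' ∩ nb G v)
    have e4 : (A' ∪ B')ᶜ.card + (A'.card + B'.card) = n := by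
      rw [← Finset.card_union_of_disjoint hdis]
      have := Finset.card_add_card_compl (A' ∪ B')
      rw [Fintype.card_fin] at this
      omega
    have e4' : ((A' ∪ B')ᶜ.card : ℝ) + (A'.card + B'.card) = n := by exact_mod_cast e4
    have e5 : ((nb G v).card : ℝ) ≤ (A' ∩ nb G v).card + (B' ∩ nb G v).card + (A' ∪ B')ᶜ.card := by
      exact_mod_cast e2.trans (by omega)
    linarith
  have hdv := hd v
  by_cases hv : v ∈ L
  · have hlt : ((A' ∩ nb G v).card : ℝ) < k := by
      exact_mod_cast (Finset.mem_filter.1 hv).2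
    have e1 : miss G L v = Lᶜ \ nb G v := by
      ext w
      simp [miss, mem_nb, hv]
    have e2 := hsplit Lᶜ v
    have e3 : ((B' ∩ nb G v).card : ℝ) ≤ (Lᶜ ∩ nb G v).card := by
      exact_mod_cast Finset.card_le_card (Finset.inter_subset_inter hBL le_rfl)
    rw [e1]
    nlinarith
  · have hge : k ≤ (A' ∩ nb G v).card := by
      rw [hL, Finset.mem_filter] at hv
      push Not at hv
      exact hv (Finset.mem_univ _)
    have hB := hdich v hge
    have e1 : miss G L v = L \ nb G v := by
      ext w
      simp [miss, mem_nb, hv]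
    have e2 := hsplit L v
    have e3 : ((A' ∩ nb G v).card : ℝ) ≤ (L ∩ nb G v).card := by
      exact_mod_cast Finset.card_le_card (Finset.inter_subset_inter hAL le_rfl)
    rw [e1]
    nlinarith

lemma structure_thm {k : ℕ} (hk : 2 ≤ k) {γ : ℝ} (hγ : 0 < γ) :
    ∃ n0 : ℕ, ∀ n ≥ n0, ∀ G : SimpleGraph (Fin n), IsSpexWheel (2 * k + 1) G →
      (n : ℝ) / 2 ≤ lam1 G → ∃ x : Fin n → ℝ, (∀ v, 1 - γ ≤ x v) ∧ (∀ v, x v ≤ 1) ∧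
      (∀ v, 0 ≤ x v) ∧
      (∀ v, nsum G x v = lam1 G * x v) ∧ ∃ L : Finset (Fin n), (1 / 2 - γ) * n ≤ L.card ∧
      (1 / 2 - γ) * n ≤ (Lᶜ).card ∧ ∀ v, ((miss G L v).card : ℝ) ≤ γ * n := by
  set ε : ℝ := min γ 1 / (100 * (k + 1)) with hε'
  have hk0 : (0 : ℝ) ≤ k := by positivity
  have hmin : 0 < min γ 1 := lt_min hγ one_pos
  have hε : 0 < ε := by positivity
  have hεeq : 100 * (k + 1) * ε = min γ 1 := by rw [hε']; field_simp
  have hεk : 100 * (k + 1) * ε ≤ 1 := hεeq ▸ min_le_right _ _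
  have hεγ : 100 * (k + 1) * ε ≤ γ := hεeq ▸ min_le_left _ _
  obtain ⟨n1, hn1⟩ := nbhd_sparse hk (η := ε ^ 2) (by positivity)
  obtain ⟨n2, hn2⟩ := exists_nat_gt ((3 * k + 3) / ε)
  refine ⟨n1 + n2 + 1, fun n hn G hG hl => ?_⟩
  have hn3 : 3 * k + 3 ≤ ε * n := by
    have : (n2 : ℝ) ≤ n := by exact_mod_cast (by omega : n2 ≤ n)
    have := hn2.trans_le this
    rw [div_lt_iff₀ hε] at this
    linarith
  have hn0 : 0 < n := by omega
  have hnpos : (0 : ℝ) < n := by exact_mod_cast hn0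
  obtain ⟨x, hx0, hx1, ⟨u, hu⟩, hx⟩ := exists_perron hn0 G
  have hε4 : ε < 1 / 4 := by nlinarith
  have hke : 0 ≤ k * ε := by positivity
  have hεγ' : 100 * ε + 100 * (k * ε) ≤ γ := by linarith
  obtain ⟨hl2, A, a1, a2, a3, a4⟩ := near_bip G hε hε4 hn0 (hn1 n (by omega) G hG.1) hl x hx0 hx1 u hu hx
  obtain ⟨A', B', b1, b2, b3, b4, b5, b6⟩ := near_bip2 G hε hn0 x hx1 A a1 a2 a3 a4
  have hent := entries_lower G hG hε hεk hn3 hl hl2 x hx0 hx1 hx A' B' b2 b5 b6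
  obtain ⟨L, c1, c2, c3⟩ := partition_exists hk G hG.1 hε hεk hn3 A' B' b1 b2 b3 b4 b5
    (fun v => (hent v).2)
  refine ⟨x, fun v => ?_, hx1, hx0, hx, L, ?_, ?_, fun v => ?_⟩
  · have := (hent v).1
    linarith
  · refine le_trans ?_ c1
    apply mul_le_mul_of_nonneg_right _ hnpos.le
    linarith
  · refine le_trans ?_ c2
    apply mul_le_mul_of_nonneg_right _ hnpos.le
    linarith
  · refine (c3 v).trans ?_
    rw [← mul_assoc]
    apply mul_le_mul_of_nonneg_right _ hnpos.le
    linarith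

end structure2

section structure3
open Classical

/-- The approximate structure: a nearly balanced partition with few missing cross edges. -/
def Str {n : ℕ} (G : SimpleGraph (Fin n)) (L : Finset (Fin n)) (γ : ℝ) : Prop :=
  (1 / 2 - γ) * n ≤ L.card ∧ (1 / 2 - γ) * n ≤ (Lᶜ).card ∧ ∀ v, ((miss G L v).card : ℝ) ≤ γ * n

lemma Str.compl {n : ℕ} {G : SimpleGraph (Fin n)} {L : Finset (Fin n)} {γ : ℝ}
    (h : Str G L γ) : Str G Lᶜ γ := by
  refine ⟨h.2.1, by rw [compl_compl]; exact h.1, fun v => ?_⟩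
  have : miss G Lᶜ v = miss G L v := by
    ext w
    simp only [miss, Finset.mem_filter, Finset.mem_univ, true_and, Finset.mem_compl]
    tauto
  rw [this]; exact h.2.2 v

lemma miss_of_mem {n : ℕ} {G : SimpleGraph (Fin n)} {L : Finset (Fin n)} {v : Fin n}
    (hv : v ∈ L) : miss G L v = Lᶜ \ nb G v := by
  ext w
  simp [miss, mem_nb, hv]

lemma common_str {n k : ℕ} {G : SimpleGraph (Fin n)} {L : Finset (Fin n)} {γ : ℝ}
    (hγ : 0 ≤ γ) (h : Str G L γ) (S : Finset (Fin n)) (hS : S ⊆ L) (hSk : S.card ≤ k + 1) :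
    ((Lᶜ).card : ℝ) - (k + 1) * (γ * n) ≤ ((Lᶜ.filter (fun d => ∀ s ∈ S, G.Adj s d)).card : ℝ) := by
  have h1 := common_card G S Lᶜ (γ * n) (fun s hs => by
    rw [← miss_of_mem (hS hs)]; exact h.2.2 s)
  have h2 : (S.card : ℝ) ≤ k + 1 := by exact_mod_cast hSk
  have h3 : (S.card : ℝ) * (γ * n) ≤ (k + 1) * (γ * n) :=
    mul_le_mul_of_nonneg_right h2 (by positivity)
  linarith

lemma no_forest {n k : ℕ} (hk : 2 ≤ k) {G : SimpleGraph (Fin n)} (hG : WheelFree (2 * k + 1) G)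
    {L : Finset (Fin n)} {γ : ℝ} (hγ : 0 ≤ γ) (h : Str G L γ)
    (hbig : 2 * k ≤ (1 / 2 - (k + 2) * γ) * n) (u : Fin n) (hu : u ∈ L) (S : Finset (Fin n))
    (hS : S ⊆ L ∩ nb G u) (hSk : S.card ≤ k) (Q : List (List (Fin n)))
    (hQnd : Q.flatten.Nodup)
    (hQ : ∀ q ∈ Q, q ≠ [] ∧ q.IsChain G.Adj ∧ ∀ t ∈ q, t ∉ L ∧ G.Adj u t ∧ ∀ s ∈ S, G.Adj s t)
    (hlen : Q.length ≤ S.card)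
    (htot : Q.flatten.length + (S.card - Q.length) + S.card = 2 * k) : False := by
  apply hG
  have hc := common_str (k := k) hγ h (insert u S) (by
    intro s hs
    rw [Finset.mem_insert] at hs
    rcases hs with rfl | hs
    · exact hu
    · exact (Finset.mem_inter.1 (hS hs)).1) ((Finset.card_insert_le _ _).trans (by omega))
  refine wheel_of_forest hk G u S (Lᶜ.filter (fun d => ∀ s ∈ insert u S, G.Adj s d))
    (fun s hs => mem_nb.1 (Finset.mem_inter.1 (hS hs)).2) ?_ ?_ Q hQnd ?_ hlen htot ?_
  · intro c hc
    exact (Finset.mem_filter.1 hc).2 u (Finset.mem_insert_self _ _)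
  · intro s hs c hc
    exact (Finset.mem_filter.1 hc).2 s (Finset.mem_insert_of_mem hs)
  · intro q hq
    refine ⟨(hQ q hq).1, (hQ q hq).2.1, fun t ht => ?_⟩
    obtain ⟨h1, h2, h3⟩ := (hQ q hq).2.2 t ht
    rw [Finset.mem_filter, Finset.mem_compl]
    refine ⟨h1, fun s hs => ?_⟩
    rw [Finset.mem_insert] at hs
    rcases hs with rfl | hs
    · exact h2
    · exact h3 s hs
  · have h2 := h.2.1
    have : (2 * k : ℝ) ≤ (Lᶜ.filter (fun d => ∀ s ∈ insert u S, G.Adj s d)).card := by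
      linarith
    exact_mod_cast this

lemma own_deg_le {n k : ℕ} (hk : 2 ≤ k) {G : SimpleGraph (Fin n)} (hG : WheelFree (2 * k + 1) G)
    {L : Finset (Fin n)} {γ : ℝ} (hγ : 0 ≤ γ) (h : Str G L γ)
    (hbig : 2 * k ≤ (1 / 2 - (k + 2) * γ) * n) (u : Fin n) (hu : u ∈ L) :
    (L ∩ nb G u).card ≤ k - 1 := by
  by_contra hcon
  obtain ⟨S, hS, hSk⟩ := Finset.exists_subset_card_eq (show k ≤ (L ∩ nb G u).card by omega)
  exact no_forest hk hG hγ h hbig u hu S hS hSk.le [] (by simp) (by simp) (by simp)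
    (by simp [hSk]; omega)

lemma greedy {n k : ℕ} (G : SimpleGraph (Fin n)) (R C D : Finset (Fin n)) (j : ℕ) (hj : j ≤ 2)
    (hdeg : ∀ v ∈ R, (R ∩ nb G v).card ≤ k) (hDR : D ⊆ R)
    (hpiece : ∀ v ∈ D, ∃ q : List (Fin n), q.length = j + 1 ∧ q.Nodup ∧ q.IsChain G.Adj ∧
      ∀ t ∈ q, t = v ∨ t ∈ R ∩ nb G v) (t : ℕ) (hCR : C ⊆ R)
    (hD : (t * 3 + (R \ C).card) * (k + 1) < D.card) :
    ∃ Q : List (List (Fin n)), Q.length = t ∧ Q.flatten.length = t * (j + 1) ∧ Q.flatten.Nodup ∧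
      ∀ q ∈ Q, q ≠ [] ∧ q.IsChain G.Adj ∧ ∀ s ∈ q, s ∈ C := by
  induction t with
  | zero => exact ⟨[], by simp⟩
  | succ t ih =>
    obtain ⟨Q, q1, q2, q3, q4⟩ := ih (by
      refine lt_of_le_of_lt (Nat.mul_le_mul_right _ ?_) hD
      omega)
    set X := Q.flatten.toFinset ∪ (R \ C) with hX
    have hFC : ∀ s ∈ Q.flatten, s ∈ C := by
      intro s hs
      rw [List.mem_flatten] at hs
      obtain ⟨q, hq, hsq⟩ := hs
      exact (q4 q hq).2.2 s hsq
    have hXR : X ⊆ R := by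
      intro s hs
      rw [hX, Finset.mem_union, List.mem_toFinset, Finset.mem_sdiff] at hs
      rcases hs with hs | hs
      · exact hCR (hFC s hs)
      · exact hs.1
    have hXc : X.card ≤ (t + 1) * 3 + (R \ C).card := by
      have h1 := Finset.card_union_le Q.flatten.toFinset (R \ C)
      have h2 := List.toFinset_card_le Q.flatten
      have h3 : t * (j + 1) ≤ t * 3 := Nat.mul_le_mul_left _ (by omega)
      rw [← hX] at h1
      omega
    set bad := X ∪ X.biUnion (fun s => R ∩ nb G s) with hbad
    have hbadc : bad.card ≤ X.card * (k + 1) := by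
      refine (Finset.card_union_le _ _).trans ?_
      have : (X.biUnion (fun s => R ∩ nb G s)).card ≤ X.card * k :=
        Finset.card_biUnion_le_card_mul _ _ _ (fun s hs => hdeg s (hXR hs))
      nlinarith
    have hlt : bad.card < D.card := by
      refine lt_of_le_of_lt (hbadc.trans (Nat.mul_le_mul_right _ hXc)) hD
    obtain ⟨v, hvD, hvb⟩ := Finset.exists_mem_notMem_of_card_lt_card hlt
    obtain ⟨q, l1, l2, l3, l4⟩ := hpiece v hvD
    have hnX : ∀ s ∈ q, s ∈ R ∧ s ∉ X := by
      intro s hs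
      rcases l4 s hs with rfl | h
      · refine ⟨hDR hvD, fun h => hvb (Finset.mem_union_left _ h)⟩
      · rw [Finset.mem_inter, mem_nb] at h
        refine ⟨h.1, fun hX => hvb (Finset.mem_union_right _ ?_)⟩
        rw [Finset.mem_biUnion]
        exact ⟨s, hX, Finset.mem_inter.2 ⟨hDR hvD, mem_nb.2 h.2.symm⟩⟩
    have hnX' : ∀ s ∈ q, s ∈ C ∧ s ∉ Q.flatten := by
      intro s hs
      obtain ⟨h1, h2⟩ := hnX s hs
      rw [hX, Finset.mem_union, List.mem_toFinset, Finset.mem_sdiff] at h2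
      push Not at h2
      exact ⟨h2.2 h1, h2.1⟩
    refine ⟨q :: Q, by simp [q1], ?_, ?_, ?_⟩
    · rw [List.flatten_cons, List.length_append, q2, l1]; ring
    · rw [List.flatten_cons, List.nodup_append]
      refine ⟨l2, q3, ?_⟩
      rintro a ha b hb rfl
      exact (hnX' a ha).2 hb
    · intro q' hq'
      rw [List.mem_cons] at hq'
      rcases hq' with rfl | hq'
      · refine ⟨?_, l3, fun s hs => (hnX' s hs).1⟩
        rintro rfl
        simp at l1
      · exact q4 q' hq'

lemma few_gen {n k : ℕ} (hk : 2 ≤ k) {G : SimpleGraph (Fin n)} (hG : WheelFree (2 * k + 1) G)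
    {L : Finset (Fin n)} {γ : ℝ} (hγ : 0 ≤ γ) (h : Str G L γ)
    (hbig : 2 * k ≤ (1 / 2 - (k + 2) * γ) * n) (hbig2 : 6 * k < γ * n) (u : Fin n) (hu : u ∈ L)
    (j t p : ℕ) (hj : j ≤ 2) (hp : (L ∩ nb G u).card = p) (htp : t ≤ p)
    (htot : t * (j + 1) + (p - t) + p = 2 * k) (D : Finset (Fin n)) (hDR : D ⊆ Lᶜ)
    (hpiece : ∀ v ∈ D, ∃ q : List (Fin n), q.length = j + 1 ∧ q.Nodup ∧ q.IsChain G.Adj ∧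
      ∀ t ∈ q, t = v ∨ t ∈ Lᶜ ∩ nb G v) :
    (D.card : ℝ) ≤ (k + 1) * (k + 2) * (γ * n) := by
  by_contra hcon
  push Not at hcon
  have hpk : p ≤ k - 1 := hp ▸ own_deg_le hk hG hγ h hbig u hu
  set S := L ∩ nb G u with hS
  set C := Lᶜ.filter (fun d => ∀ s ∈ insert u S, G.Adj s d) with hC
  have hc := common_str (k := k) hγ h (insert u S) (by
    intro s hs
    rw [Finset.mem_insert] at hs
    rcases hs with rfl | hs
    · exact hu
    · exact (Finset.mem_inter.1 hs).1) ((Finset.card_insert_le _ _).trans (by omega))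
  rw [← hC] at hc
  have hsd : ((Lᶜ \ C).card : ℝ) ≤ (k + 1) * (γ * n) := by
    have h1 := Finset.card_sdiff_add_card_eq_card (Finset.filter_subset _ _ : C ⊆ Lᶜ)
    have h2 : ((Lᶜ \ C).card : ℝ) + C.card = (Lᶜ).card := by exact_mod_cast h1
    linarith
  have htk : (t : ℝ) * 3 ≤ 6 * k := by
    have : (t : ℝ) ≤ k := by exact_mod_cast (by omega : t ≤ k)
    have hk0 : (0 : ℝ) ≤ k := by positivity
    linarith
  obtain ⟨Q, q1, q2, q3, q4⟩ := greedy (k := k) G Lᶜ C D j hj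
    (fun v hv => (own_deg_le hk hG hγ h.compl hbig v hv).trans (by omega)) hDR hpiece t
    (Finset.filter_subset _ _) (by
      have : ((t * 3 + (Lᶜ \ C).card) * (k + 1) : ℝ) < D.card := by
        refine lt_of_le_of_lt ?_ hcon
        have e1 : (t * 3 + (Lᶜ \ C).card : ℝ) ≤ (k + 2) * (γ * n) := by linarith
        have := mul_le_mul_of_nonneg_right e1 (by positivity : (0 : ℝ) ≤ k + 1)
        linarith
      exact_mod_cast this)
  refine no_forest hk hG hγ h hbig u hu S le_rfl (by omega) Q q3 ?_ (by omega) (by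
    rw [q2, q1, hp]; exact htot)
  intro q hq
  obtain ⟨r1, r2, r3⟩ := q4 q hq
  refine ⟨r1, r2, fun s hs => ?_⟩
  have := r3 s hs
  rw [hC, Finset.mem_filter, Finset.mem_compl] at this
  exact ⟨this.1, this.2 u (Finset.mem_insert_self _ _),
    fun s' hs' => this.2 s' (Finset.mem_insert_of_mem hs')⟩

lemma few_deg1 {n k : ℕ} (hk : 2 ≤ k) {G : SimpleGraph (Fin n)} (hG : WheelFree (2 * k + 1) G)
    {L : Finset (Fin n)} {γ : ℝ} (hγ : 0 ≤ γ) (h : Str G L γ)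
    (hbig : 2 * k ≤ (1 / 2 - (k + 2) * γ) * n) (hbig2 : 6 * k < γ * n) (u : Fin n) (hu : u ∈ L)
    (hp : 2 * k ≤ 3 * (L ∩ nb G u).card) :
    ((Lᶜ.filter (fun v => 1 ≤ (Lᶜ ∩ nb G v).card)).card : ℝ) ≤ (k + 1) * (k + 2) * (γ * n) := by
  have hpk : (L ∩ nb G u).card ≤ k - 1 := own_deg_le hk hG hγ h hbig u hu
  refine few_gen hk hG hγ h hbig hbig2 u hu 1 (2 * (k - (L ∩ nb G u).card)) _ (by omega) rfl
    (by omega) (by omega) _ (Finset.filter_subset _ _) ?_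
  intro v hv
  have h1 := (Finset.mem_filter.1 hv).2
  obtain ⟨w, hw⟩ := Finset.card_pos.1 h1
  have hvw := mem_nb.1 (Finset.mem_inter.1 hw).2
  refine ⟨[v, w], rfl, by simp [hvw.ne], by simp [hvw], ?_⟩
  intro t ht
  simp only [List.mem_cons, List.not_mem_nil, or_false] at ht
  rcases ht with rfl | rfl
  · exact Or.inl rfl
  · exact Or.inr hw

lemma few_deg2 {n k : ℕ} (hk : 2 ≤ k) {G : SimpleGraph (Fin n)} (hG : WheelFree (2 * k + 1) G)
    {L : Finset (Fin n)} {γ : ℝ} (hγ : 0 ≤ γ) (h : Str G L γ)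
    (hbig : 2 * k ≤ (1 / 2 - (k + 2) * γ) * n) (hbig2 : 6 * k < γ * n) (u : Fin n) (hu : u ∈ L)
    (hp : k ≤ 2 * (L ∩ nb G u).card) :
    ((Lᶜ.filter (fun v => 2 ≤ (Lᶜ ∩ nb G v).card)).card : ℝ) ≤ (k + 1) * (k + 2) * (γ * n) := by
  have hpk : (L ∩ nb G u).card ≤ k - 1 := own_deg_le hk hG hγ h hbig u hu
  refine few_gen hk hG hγ h hbig hbig2 u hu 2 (k - (L ∩ nb G u).card) _ (by omega) rfl
    (by omega) (by omega) _ (Finset.filter_subset _ _) ?_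
  intro v hv
  have h1 := (Finset.mem_filter.1 hv).2
  obtain ⟨w, hw, w', hw', hne⟩ := Finset.one_lt_card.1 (by omega : 1 < (Lᶜ ∩ nb G v).card)
  have hvw := mem_nb.1 (Finset.mem_inter.1 hw).2
  have hvw' := mem_nb.1 (Finset.mem_inter.1 hw').2
  refine ⟨[w, v, w'], rfl, by simp [hvw.ne', hvw'.ne, hne], by simp [hvw.symm, hvw'], ?_⟩
  intro t ht
  simp only [List.mem_cons, List.not_mem_nil, or_false] at ht
  rcases ht with rfl | rfl | rfl
  · exact Or.inr hw
  · exact Or.inl rfl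
  · exact Or.inr hw'

end structure3

section structure4
open Classical

lemma qf_upper {n : ℕ} (G : SimpleGraph (Fin n)) (x : Fin n → ℝ) (hx : ∀ v, 0 ≤ x v)
    (L : Finset (Fin n)) :
    qf G x ≤ 2 * ((∑ v ∈ L, x v) * ∑ v ∈ Lᶜ, x v) + ∑ v ∈ L, ∑ w ∈ L ∩ nb G v, x v * x w
      + ∑ v ∈ Lᶜ, ∑ w ∈ Lᶜ ∩ nb G v, x v * x w := by
  have key : ∀ A : Finset (Fin n), ∑ v ∈ A, x v * nsum G x v ≤
      ∑ v ∈ A, ∑ w ∈ A ∩ nb G v, x v * x w + (∑ v ∈ A, x v) * ∑ v ∈ Aᶜ, x v := by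
    intro A
    rw [Finset.sum_mul, ← Finset.sum_add_distrib]
    refine Finset.sum_le_sum fun v _ => ?_
    rw [← Finset.mul_sum, ← mul_add]
    refine mul_le_mul_of_nonneg_left ?_ (hx v)
    rw [nsum_eq_nb]
    have h1 : nb G v ⊆ (A ∩ nb G v) ∪ Aᶜ := by
      intro w hw
      by_cases h : w ∈ A <;> simp [h, hw]
    have h2 : Disjoint (A ∩ nb G v) Aᶜ := by
      rw [Finset.disjoint_left]
      intro w hw hw'
      exact (Finset.mem_compl.1 hw') (Finset.mem_inter.1 hw).1
    rw [← Finset.sum_union h2]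
    exact Finset.sum_le_sum_of_subset_of_nonneg h1 (fun i _ _ => hx i)
  rw [qf_eq_nsum, ← Finset.sum_add_sum_compl L]
  have h1 := key L
  have h2 := key Lᶜ
  rw [compl_compl] at h2
  linarith

lemma inner_le {n : ℕ} (G : SimpleGraph (Fin n)) (x : Fin n → ℝ) (A : Finset (Fin n)) :
    ∑ v ∈ A, ∑ w ∈ A ∩ nb G v, x v * x w ≤ ∑ v ∈ A, ((A ∩ nb G v).card : ℝ) * x v ^ 2 := by
  have h1 : ∑ v ∈ A, ∑ w ∈ A ∩ nb G v, x w ^ 2 = ∑ v ∈ A, ∑ w ∈ A ∩ nb G v, x v ^ 2 := by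
    refine Finset.sum_comm' ?_
    intro v w
    simp only [Finset.mem_inter, mem_nb]
    have := G.adj_comm v w
    tauto
  have h2 : ∑ v ∈ A, ∑ w ∈ A ∩ nb G v, x v ^ 2 = ∑ v ∈ A, ((A ∩ nb G v).card : ℝ) * x v ^ 2 := by
    refine Finset.sum_congr rfl fun v _ => ?_
    rw [Finset.sum_const, nsmul_eq_mul]
  have h3 : ∑ v ∈ A, ∑ w ∈ A ∩ nb G v, x v * x w ≤
      ∑ v ∈ A, ∑ w ∈ A ∩ nb G v, (x v ^ 2 / 2 + x w ^ 2 / 2) := by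
    refine Finset.sum_le_sum fun v _ => Finset.sum_le_sum fun w _ => ?_
    nlinarith [sq_nonneg (x v - x w)]
  simp only [Finset.sum_add_distrib, ← Finset.sum_div] at h3
  linarith

lemma sq_sum_lower {n : ℕ} (x : Fin n → ℝ) {γ : ℝ} (hγ1 : γ ≤ 1) (hx1 : ∀ v, 1 - γ ≤ x v) :
    (1 - γ) ^ 2 * n ≤ ∑ v, x v ^ 2 := by
  have : ∑ v : Fin n, (1 - γ) ^ 2 ≤ ∑ v, x v ^ 2 :=
    Finset.sum_le_sum fun v _ => pow_le_pow_left₀ (by linarith) (hx1 v) 2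
  simpa [mul_comm] using this

lemma eig_qf {n : ℕ} (G : SimpleGraph (Fin n)) (x : Fin n → ℝ)
    (hx : ∀ v, nsum G x v = lam1 G * x v) : qf G x = lam1 G * ∑ v, x v ^ 2 := by
  rw [qf_eq_nsum, Finset.mul_sum]
  refine Finset.sum_congr rfl fun v _ => ?_
  rw [hx]; ring

lemma deg_sum {n k : ℕ} (hk : 1 ≤ k) (G : SimpleGraph (Fin n)) (x : Fin n → ℝ) {γ : ℝ} (hγ1 : γ ≤ 1)
    (hx1 : ∀ v, 1 - γ ≤ x v) (hx2 : ∀ v, x v ≤ 1) (hx0 : ∀ v, 0 ≤ x v)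
    (hx : ∀ v, nsum G x v = lam1 G * x v)
    (hlam : (n : ℝ) / 2 + ((k : ℝ) - 1) / 2 ≤ lam1 G) (L : Finset (Fin n)) :
    ((k : ℝ) - 1) / 2 * ((1 - γ) ^ 2 * n) ≤
      ∑ v ∈ L, ((L ∩ nb G v).card : ℝ) + ∑ v ∈ Lᶜ, ((Lᶜ ∩ nb G v).card : ℝ) := by
  have h1 := qf_upper G x hx0 L
  have h2 := inner_le G x L
  have h3 := inner_le G x Lᶜ
  have h4 := sq_sum_lower x hγ1 hx1
  have hone : ∀ A : Finset (Fin n), ∑ v ∈ A, ((A ∩ nb G v).card : ℝ) * x v ^ 2 ≤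
      ∑ v ∈ A, ((A ∩ nb G v).card : ℝ) := by
    intro A
    refine Finset.sum_le_sum fun v _ => ?_
    have : x v ^ 2 ≤ 1 := pow_le_one₀ (hx0 v) (hx2 v)
    have h5 : (0 : ℝ) ≤ ((A ∩ nb G v).card : ℝ) := by positivity
    nlinarith
  have h5 := hone L
  have h6 := hone Lᶜ
  have h7 : (∑ v, x v) ^ 2 ≤ n * ∑ v, x v ^ 2 := by
    have := sq_sum_le_card_mul_sum_sq (s := (Finset.univ : Finset (Fin n))) (f := x)
    simpa using this
  rw [eig_qf G x hx] at h1
  rw [← Finset.sum_add_sum_compl L x] at h7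
  set P := ∑ v ∈ L, x v
  set Q := ∑ v ∈ Lᶜ, x v
  set X := ∑ v, x v ^ 2
  have hX : 0 ≤ X := Finset.sum_nonneg fun v _ => sq_nonneg _
  have h8 : 2 * (P * Q) ≤ n * X / 2 := by nlinarith [sq_nonneg (P - Q)]
  have h9 := mul_le_mul_of_nonneg_right hlam hX
  have hk' : (0 : ℝ) ≤ ((k : ℝ) - 1) / 2 := by
    have : (1 : ℝ) ≤ k := by exact_mod_cast hk
    linarith
  have h10 := mul_le_mul_of_nonneg_left h4 hk'
  linarith

lemma card_upper {n : ℕ} {G : SimpleGraph (Fin n)} {L : Finset (Fin n)} {γ : ℝ}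
    (h : Str G L γ) : (L.card : ℝ) ≤ (1 / 2 + γ) * n := by
  have h1 := h.2.1
  have h2 : (L.card : ℝ) + (Lᶜ).card = n := by
    have := Finset.card_add_card_compl L
    rw [Fintype.card_fin] at this
    exact_mod_cast this
  linarith

/-- The sum of own degrees when all but few are at most `j`. -/
lemma sum_own_le {n k : ℕ} {G : SimpleGraph (Fin n)} {L : Finset (Fin n)} (j : ℕ) {m : ℝ}
    (hdeg : ∀ v ∈ L, (L ∩ nb G v).card ≤ k)
    (hfew : ((L.filter (fun v => j + 1 ≤ (L ∩ nb G v).card)).card : ℝ) ≤ m) :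
    ∑ v ∈ L, ((L ∩ nb G v).card : ℝ) ≤ j * L.card + k * m := by
  have h1 : ∑ v ∈ L, ((L ∩ nb G v).card : ℝ) ≤
      ∑ v ∈ L, ((j : ℝ) + if j + 1 ≤ (L ∩ nb G v).card then (k : ℝ) else 0) := by
    refine Finset.sum_le_sum fun v hv => ?_
    split_ifs with h
    · have := hdeg v hv
      have : ((L ∩ nb G v).card : ℝ) ≤ k := by exact_mod_cast this
      have : (0 : ℝ) ≤ j := by positivity
      linarith
    · rw [add_zero]
      exact_mod_cast (by omega : (L ∩ nb G v).card ≤ j)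
  refine h1.trans ?_
  rw [Finset.sum_add_distrib, ← Finset.sum_filter]
  simp only [Finset.sum_const, nsmul_eq_mul]
  have : (0 : ℝ) ≤ k := by positivity
  nlinarith

lemma exists_max_own {n : ℕ} (G : SimpleGraph (Fin n)) (L : Finset (Fin n)) (hL : L.Nonempty) :
    ∃ u ∈ L, ∀ v ∈ L, (L ∩ nb G v).card ≤ (L ∩ nb G u).card :=
  Finset.exists_max_image L _ hL

set_option maxHeartbeats 1600000 in
lemma exists_full {n k : ℕ} (hk : 6 ≤ k) (hke : Even k) {G : SimpleGraph (Fin n)}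
    (hG : WheelFree (2 * k + 1) G)
    {L : Finset (Fin n)} {γ : ℝ} (hγ : 0 ≤ γ) (h : Str G L γ)
    (hbig : 2 * k ≤ (1 / 2 - (k + 2) * γ) * n) (hbig2 : 6 * k < γ * n)
    (hsmall : 100 * (k : ℝ) ^ 3 * γ ≤ 1 / 100)
    (hsum : ((k : ℝ) - 1) / 2 * ((1 - γ) ^ 2 * n) ≤
      ∑ v ∈ L, ((L ∩ nb G v).card : ℝ) + ∑ v ∈ Lᶜ, ((Lᶜ ∩ nb G v).card : ℝ)) :
    ∃ L', (L' = L ∨ L' = Lᶜ) ∧ ∃ u ∈ L', (L' ∩ nb G u).card = k - 1 := by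
  by_contra hcon
  have hk6 : (6 : ℝ) ≤ k := by exact_mod_cast hk
  have hn0 : (0 : ℝ) < n := by
    by_contra h0
    have : (n : ℝ) = 0 := le_antisymm (not_lt.1 h0) (by positivity)
    rw [this] at hbig2
    linarith
  have hγk : (k : ℝ) * γ ≤ 1 / 10000 := by
    have : (k : ℝ) * γ ≤ 100 * (k : ℝ) ^ 3 * γ := by
      apply mul_le_mul_of_nonneg_right _ hγ
      nlinarith [pow_pos (by linarith : (0:ℝ) < k) 2, mul_pos (by linarith : (0:ℝ) < k) (by linarith : (0:ℝ) < k)]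
    have h36 : 36 * ((k : ℝ) * γ) ≤ (k : ℝ) ^ 3 * γ := by
      have : 36 * (k : ℝ) ≤ k ^ 3 := by nlinarith [mul_pos (by linarith : (0:ℝ) < k) (by linarith : (0:ℝ) < k)]
      nlinarith
    have : 0 ≤ (k : ℝ) * γ := by positivity
    nlinarith
  have hk3 : (k : ℝ) * ((k + 1) * (k + 2) * γ) ≤ 1 / 1000 := by
    have : (k : ℝ) * ((k + 1) * (k + 2)) ≤ 4 * k ^ 3 := by nlinarith [mul_pos (by linarith : (0:ℝ) < k) (by linarith : (0:ℝ) < k)]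
    nlinarith
  have hγ4 : γ ≤ 1 / 10000 := by nlinarith
  have hsq : 1 - 2 * γ ≤ (1 - γ) ^ 2 := by nlinarith
  have hmain : ((k : ℝ) - 1) / 2 * n - n / 1000 ≤
      ∑ v ∈ L, ((L ∩ nb G v).card : ℝ) + ∑ v ∈ Lᶜ, ((Lᶜ ∩ nb G v).card : ℝ) := by
    refine le_trans ?_ hsum
    have h1 : ((k : ℝ) - 1) / 2 - 1 / 1000 ≤ ((k : ℝ) - 1) / 2 * (1 - γ) ^ 2 := by nlinarith
    nlinarith
  have hownL : ∀ v ∈ L, (L ∩ nb G v).card ≤ k - 2 := by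
    intro v hv
    have h1 := own_deg_le (by omega) hG hγ h hbig v hv
    have h2 : (L ∩ nb G v).card ≠ k - 1 := fun h3 => hcon ⟨L, Or.inl rfl, v, hv, h3⟩
    omega
  have hownR : ∀ v ∈ Lᶜ, (Lᶜ ∩ nb G v).card ≤ k - 2 := by
    intro v hv
    have h1 := own_deg_le (by omega) hG hγ h.compl hbig v hv
    have h2 : (Lᶜ ∩ nb G v).card ≠ k - 1 := fun h3 => hcon ⟨Lᶜ, Or.inr rfl, v, hv, h3⟩
    omega
  have hLne : L.Nonempty := by
    rw [Finset.nonempty_iff_ne_empty]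
    rintro rfl
    have := h.1
    simp at this
    nlinarith
  have hRne : (Lᶜ).Nonempty := by
    rw [Finset.nonempty_iff_ne_empty]
    intro he
    have := h.2.1
    rw [he] at this
    simp at this
    nlinarith
  have hcL := card_upper h
  have hcR := card_upper h.compl
  obtain ⟨u, hu, hum⟩ := exists_max_own G L hLne
  obtain ⟨w, hw, hwm⟩ := exists_max_own G Lᶜ hRne
  have hup := hownL u hu
  have hwp := hownR w hw
  -- bounds by max
  have hmaxb : ∀ (A : Finset (Fin n)) (p : ℕ), (∀ v ∈ A, (A ∩ nb G v).card ≤ p) →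
      ∑ v ∈ A, ((A ∩ nb G v).card : ℝ) ≤ p * A.card := by
    intro A p hp
    have : ∑ v ∈ A, ((A ∩ nb G v).card : ℝ) ≤ ∑ v ∈ A, (p : ℝ) :=
      Finset.sum_le_sum fun v hv => by exact_mod_cast hp v hv
    simpa [mul_comm] using this
  set M : ℝ := (k + 1) * (k + 2) * (γ * n) with hM
  have hkM : k * M ≤ n / 1000 := by rw [hM]; nlinarith
  have hSL := hmaxb L _ hum
  have hSR := hmaxb Lᶜ _ hwm
  have final : ∀ (c d : ℕ), 3 * (c + d) + 4 ≤ 3 * k → ∑ v ∈ L, ((L ∩ nb G v).card : ℝ) ≤ c * L.card + k * M →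
      ∑ v ∈ Lᶜ, ((Lᶜ ∩ nb G v).card : ℝ) ≤ d * (Lᶜ).card + k * M → False := by
    intro c d hcd h1 h2
    have hcd' : 3 * ((c : ℝ) + d) + 4 ≤ 3 * k := by exact_mod_cast hcd
    have hc0 : (0 : ℝ) ≤ c := by positivity
    have hd0 : (0 : ℝ) ≤ d := by positivity
    have h3 := mul_le_mul_of_nonneg_left hcL hc0
    have h4 := mul_le_mul_of_nonneg_left hcR hd0
    have h5 : ((c : ℝ) + d) * ((1 / 2 + γ) * n) ≤ (k - 4 / 3) * ((1 / 2 + γ) * n) :=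
      mul_le_mul_of_nonneg_right (by linarith) (by positivity)
    have h6 : (k - 4 / 3) * ((1 / 2 + γ) * n) ≤ (k - 4 / 3) / 2 * n + n / 1000 := by nlinarith
    nlinarith
  have hM0 : 0 ≤ k * M := by positivity
  by_cases hA : 2 * k ≤ 3 * (L ∩ nb G u).card
  · have := few_deg1 (by omega) hG hγ h hbig hbig2 u hu hA
    have h2 := sum_own_le (G := G) (k := k) 0 (fun v hv => (hownR v hv).trans (by omega)) this
    exact final (k - 2) 0 (by omega) ((hmaxb L _ hownL).trans (by linarith)) h2
  by_cases hB : 2 * k ≤ 3 * (Lᶜ ∩ nb G w).card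
  · have := few_deg1 (by omega) hG hγ h.compl hbig hbig2 w hw hB
    rw [compl_compl] at this
    have h2 := sum_own_le (G := G) (k := k) 0 (fun v hv => (hownL v hv).trans (by omega)) this
    exact final 0 (k - 2) (by omega) h2 ((hmaxb Lᶜ _ hownR).trans (by linarith))
  by_cases hC : k ≤ 2 * (L ∩ nb G u).card
  · have := few_deg2 (by omega) hG hγ h hbig hbig2 u hu hC
    have h2 := sum_own_le (G := G) (k := k) 1 (fun v hv => (hownR v hv).trans (by omega)) this
    exact final (L ∩ nb G u).card 1 (by omega) (hSL.trans (by linarith)) h2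
  by_cases hD : k ≤ 2 * (Lᶜ ∩ nb G w).card
  · have := few_deg2 (by omega) hG hγ h.compl hbig hbig2 w hw hD
    rw [compl_compl] at this
    have h2 := sum_own_le (G := G) (k := k) 1 (fun v hv => (hownL v hv).trans (by omega)) this
    exact final 1 (Lᶜ ∩ nb G w).card (by omega) h2 (hSR.trans (by linarith))
  obtain ⟨m, hm⟩ := hke
  exact final (L ∩ nb G u).card (Lᶜ ∩ nb G w).card (by omega) (hSL.trans (by linarith))
    (hSR.trans (by linarith))

end structure4

section structure5
open Classical

lemma many_full {n k : ℕ} (hk : 6 ≤ k) {G : SimpleGraph (Fin n)}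
    (hG : WheelFree (2 * k + 1) G)
    {L : Finset (Fin n)} {γ : ℝ} (hγ : 0 ≤ γ) (h : Str G L γ)
    (hbig : 2 * k ≤ (1 / 2 - (k + 2) * γ) * n) (hbig2 : 6 * k < γ * n)
    (hsmall : 100 * (k : ℝ) ^ 3 * γ ≤ 1 / 100)
    (hsum : ((k : ℝ) - 1) / 2 * ((1 - γ) ^ 2 * n) ≤
      ∑ v ∈ L, ((L ∩ nb G v).card : ℝ) + ∑ v ∈ Lᶜ, ((Lᶜ ∩ nb G v).card : ℝ))
    (u : Fin n) (hu : u ∈ L) (huk : (L ∩ nb G u).card = k - 1) :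
    (n : ℝ) / 4 ≤ k * ((L.filter (fun v => k - 1 ≤ (L ∩ nb G v).card)).card : ℝ) := by
  have hk6 : (6 : ℝ) ≤ k := by exact_mod_cast hk
  have hkk : (0 : ℝ) < (k : ℝ) * k := by positivity
  have h36 : 36 * ((k : ℝ) * γ) ≤ (k : ℝ) ^ 3 * γ := by
    have : 36 * (k : ℝ) ≤ k ^ 3 := by nlinarith
    nlinarith
  have hγk : (k : ℝ) * γ ≤ 1 / 10000 := by
    have : 0 ≤ (k : ℝ) * γ := by positivity
    nlinarith
  have hk3 : (k : ℝ) * ((k + 1) * (k + 2) * γ) ≤ 1 / 1000 := by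
    have : (k : ℝ) * ((k + 1) * (k + 2)) ≤ 4 * k ^ 3 := by nlinarith
    nlinarith
  have hn0 : (0 : ℝ) ≤ n := by positivity
  have hγ4 : γ ≤ 1 / 10000 := by nlinarith
  have hsq : 1 - 2 * γ ≤ (1 - γ) ^ 2 := by nlinarith
  have hmain : ((k : ℝ) - 1) / 2 * n - n / 1000 ≤
      ∑ v ∈ L, ((L ∩ nb G v).card : ℝ) + ∑ v ∈ Lᶜ, ((Lᶜ ∩ nb G v).card : ℝ) := by
    refine le_trans ?_ hsum
    have h1 : ((k : ℝ) - 1) / 2 - 1 / 1000 ≤ ((k : ℝ) - 1) / 2 * (1 - γ) ^ 2 := by nlinarith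
    nlinarith
  have h1 := few_deg1 (by omega) hG hγ h hbig hbig2 u hu (by omega)
  have h2 := sum_own_le (G := G) (k := k) 0
    (fun v hv => (own_deg_le (by omega) hG hγ h.compl hbig v hv).trans (by omega)) h1
  have h3 := sum_own_le (G := G) (L := L) (k := k) (k - 2)
    (fun v hv => (own_deg_le (by omega) hG hγ h hbig v hv).trans (by omega)) le_rfl
  rw [show k - 2 + 1 = k - 1 by omega, Nat.cast_sub (by omega)] at h3
  have h4 := card_upper h
  have hkM : k * ((k + 1) * (k + 2) * (γ * n)) ≤ (n : ℝ) / 1000 := by nlinarith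
  have h5 := mul_le_mul_of_nonneg_left h4 (by linarith : (0 : ℝ) ≤ (k : ℝ) - 2)
  push_cast at h2 h3
  have h6 : (k : ℝ) * γ * n ≤ n / 10000 := by nlinarith
  have h7 : 0 ≤ γ * n := by positivity
  linarith

lemma good_vertex {n k : ℕ} (hk : 6 ≤ k) {G : SimpleGraph (Fin n)}
    (hG : WheelFree (2 * k + 1) G)
    {L : Finset (Fin n)} {γ : ℝ} (hγ : 0 ≤ γ) (h : Str G L γ)
    (hbig : 2 * k ≤ (1 / 2 - (k + 2) * γ) * n) (hbig2 : 6 * k < γ * n)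
    (hsmall : 100 * (k : ℝ) ^ 3 * γ ≤ 1 / 100)
    (hmany : (n : ℝ) / 4 ≤ k * ((L.filter (fun v => k - 1 ≤ (L ∩ nb G v).card)).card : ℝ))
    (T : Finset (Fin n)) (hT : T ⊆ Lᶜ) (hT4 : T.card ≤ 4) :
    ∃ u ∈ L, (L ∩ nb G u).card = k - 1 ∧ ∀ t ∈ T, G.Adj u t ∧ ∀ s ∈ L ∩ nb G u, G.Adj s t := by
  have hk6 : (6 : ℝ) ≤ k := by exact_mod_cast hk
  have hn0 : (0 : ℝ) < n := by
    by_contra h0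
    have : (n : ℝ) = 0 := le_antisymm (not_lt.1 h0) (by positivity)
    rw [this] at hbig2
    linarith
  have h1 := common_str (k := 3) hγ h.compl T hT hT4
  rw [compl_compl] at h1
  have h2 := Finset.card_filter_add_card_filter_not (s := L) (fun d => ∀ s ∈ T, G.Adj s d)
  set B := L.filter (fun d => ¬ ∀ s ∈ T, G.Adj s d) with hB
  have hBc : (B.card : ℝ) ≤ 4 * (γ * n) := by
    have h2' : ((L.filter (fun d => ∀ s ∈ T, G.Adj s d)).card : ℝ) + B.card = L.card := by
      exact_mod_cast h2
    push_cast at h1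
    linarith
  set F := B ∪ B.biUnion (fun b => L ∩ nb G b) with hF
  have hFc : F.card ≤ k * B.card := by
    refine (Finset.card_union_le _ _).trans ?_
    have h3 : (B.biUnion (fun b => L ∩ nb G b)).card ≤ B.card * (k - 1) :=
      Finset.card_biUnion_le_card_mul _ _ _ fun b hb =>
        own_deg_le (by omega) hG hγ h hbig b (Finset.mem_filter.1 hb).1
    obtain ⟨m, rfl⟩ : ∃ m, k = m + 1 := ⟨k - 1, by omega⟩
    simp only [Nat.add_sub_cancel] at h3
    linarith
  have hlt : F.card < (L.filter (fun v => k - 1 ≤ (L ∩ nb G v).card)).card := by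
    by_contra hcon
    have h4 : ((L.filter (fun v => k - 1 ≤ (L ∩ nb G v).card)).card : ℝ) ≤ k * B.card := by
      exact_mod_cast (not_lt.1 hcon).trans hFc
    have h5 : (k : ℝ) * ((L.filter (fun v => k - 1 ≤ (L ∩ nb G v).card)).card : ℝ)
        ≤ k * (k * (4 * (γ * n))) := by
      apply mul_le_mul_of_nonneg_left _ (by positivity)
      exact h4.trans (mul_le_mul_of_nonneg_left hBc (by positivity))
    have h6 : (k : ℝ) * k * γ ≤ 1 / 10000 := by
      have : 0 ≤ (k : ℝ) * k * γ := by positivity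
      nlinarith
    nlinarith
  obtain ⟨u, hu, huF⟩ := Finset.exists_mem_notMem_of_card_lt_card hlt
  rw [Finset.mem_filter] at hu
  have hnB : ∀ v ∈ L, v ∉ B → ∀ t ∈ T, G.Adj v t := by
    intro v hv hvB t ht
    by_contra hcon
    apply hvB
    rw [hB, Finset.mem_filter]
    exact ⟨hv, fun hall => hcon (hall t ht).symm⟩
  refine ⟨u, hu.1, le_antisymm (own_deg_le (by omega) hG hγ h hbig u hu.1) hu.2, fun t ht => ⟨?_, ?_⟩⟩
  · exact hnB u hu.1 (fun hb => huF (Finset.mem_union_left _ hb)) t ht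
  · intro s hs
    rw [Finset.mem_inter, mem_nb] at hs
    refine hnB s hs.1 (fun hb => huF (Finset.mem_union_right _ ?_)) t ht
    rw [Finset.mem_biUnion]
    exact ⟨s, hb, Finset.mem_inter.2 ⟨hu.1, mem_nb.2 hs.2.symm⟩⟩

lemma one_edge {n k : ℕ} (hk : 6 ≤ k) {G : SimpleGraph (Fin n)}
    (hG : WheelFree (2 * k + 1) G)
    {L : Finset (Fin n)} {γ : ℝ} (hγ : 0 ≤ γ) (h : Str G L γ)
    (hbig : 2 * k ≤ (1 / 2 - (k + 2) * γ) * n) (hbig2 : 6 * k < γ * n)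
    (hsmall : 100 * (k : ℝ) ^ 3 * γ ≤ 1 / 100)
    (hmany : (n : ℝ) / 4 ≤ k * ((L.filter (fun v => k - 1 ≤ (L ∩ nb G v).card)).card : ℝ))
    (a b c d : Fin n) (ha : a ∉ L) (hb : b ∉ L) (hc : c ∉ L) (hd : d ∉ L)
    (hab : G.Adj a b) (hcd : G.Adj c d) : (a = c ∧ b = d) ∨ (a = d ∧ b = c) := by
  have path : ∀ a b c : Fin n, a ∉ L → b ∉ L → c ∉ L → G.Adj a b → G.Adj b c → a = c := by
    intro a b c ha hb hc hab hbc
    by_contra hac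
    obtain ⟨u, hu, huk, hT⟩ := good_vertex hk hG hγ h hbig hbig2 hsmall hmany {a, b, c}
      (by intro t; simp only [Finset.mem_insert, Finset.mem_singleton, Finset.mem_compl]
          rintro (rfl | rfl | rfl) <;> assumption) (Finset.card_le_three.trans (by norm_num))
    refine no_forest (by omega) hG hγ h hbig u hu (L ∩ nb G u) subset_rfl (by omega) [[a, b, c]]
      (by simp [hab.ne, hbc.ne, hac]) ?_ (by rw [huk]; simp; omega) (by rw [huk]; simp; omega)
    intro q hq
    rw [List.mem_singleton] at hq
    subst hq
    refine ⟨by simp, by simp [hab, hbc], ?_⟩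
    intro t ht
    refine ⟨?_, hT t (by simpa using ht)⟩
    simp only [List.mem_cons, List.not_mem_nil, or_false] at ht
    rcases ht with rfl | rfl | rfl <;> assumption
  by_cases hac : a = c
  · subst hac
    exact Or.inl ⟨rfl, path b a d hb ha hd hab.symm hcd⟩
  by_cases had : a = d
  · subst had
    exact Or.inr ⟨rfl, path b a c hb ha hc hab.symm hcd.symm⟩
  by_cases hbc : b = c
  · subst hbc
    exact absurd (path a b d ha hb hd hab hcd) had
  by_cases hbd : b = d
  · subst hbd
    exact absurd (path a b c ha hb hc hab hcd.symm) hac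
  exfalso
  obtain ⟨u, hu, huk, hT⟩ := good_vertex hk hG hγ h hbig hbig2 hsmall hmany {a, b, c, d}
    (by intro t; simp only [Finset.mem_insert, Finset.mem_singleton, Finset.mem_compl]
        rintro (rfl | rfl | rfl | rfl) <;> assumption) Finset.card_le_four
  refine no_forest (by omega) hG hγ h hbig u hu (L ∩ nb G u) subset_rfl (by omega) [[a, b], [c, d]]
    (by simp [hab.ne, hcd.ne, hac, had, hbc, hbd]) ?_ (by rw [huk]; simp; omega) (by rw [huk]; simp; omega)
  intro q hq
  have hq' : q = [a, b] ∨ q = [c, d] := by simpa using hq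
  have hsub : ∀ t ∈ q, t = a ∨ t = b ∨ t = c ∨ t = d := by
    rcases hq' with rfl | rfl
    · intro t ht; simp at ht; tauto
    · intro t ht; simp at ht; tauto
  refine ⟨?_, ?_, ?_⟩
  · rcases hq' with rfl | rfl <;> simp
  · rcases hq' with rfl | rfl <;> simp [hab, hcd]
  · intro t ht
    refine ⟨?_, hT t (by simpa using hsub t ht)⟩
    rcases hsub t ht with rfl | rfl | rfl | rfl <;> assumption

lemma inner_one {n : ℕ} (G : SimpleGraph (Fin n)) (R : Finset (Fin n)) (x : Fin n → ℝ)
    (hx0 : ∀ v, 0 ≤ x v) (hx1 : ∀ v, x v ≤ 1)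
    (hone : ∀ a b c d, a ∈ R → b ∈ R → c ∈ R → d ∈ R → G.Adj a b → G.Adj c d →
      (a = c ∧ b = d) ∨ (a = d ∧ b = c)) :
    ∑ v ∈ R, ∑ w ∈ R ∩ nb G v, x v * x w ≤ 2 := by
  have h1 : ∑ v ∈ R, ∑ w ∈ R ∩ nb G v, x v * x w ≤ ∑ v ∈ R, ∑ w ∈ R ∩ nb G v, (1 : ℝ) :=
    Finset.sum_le_sum fun v _ => Finset.sum_le_sum fun w _ => mul_le_one₀ (hx1 v) (hx0 w) (hx1 w)
  refine h1.trans ?_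
  simp only [Finset.sum_const, nsmul_eq_mul, mul_one]
  rw [← Nat.cast_sum, ← Finset.card_sigma]
  have h2 : (R.sigma (fun v => R ∩ nb G v)).card ≤ 2 := by
    by_cases he : R.sigma (fun v => R ∩ nb G v) = ∅
    · rw [he]; simp
    obtain ⟨⟨a, b⟩, hab⟩ := Finset.nonempty_iff_ne_empty.2 he
    simp only [Finset.mem_sigma, Finset.mem_inter, mem_nb] at hab
    refine (Finset.card_le_card (t := {⟨a, b⟩, ⟨b, a⟩}) ?_).trans Finset.card_le_two
    rintro ⟨c, d⟩ hcd
    simp only [Finset.mem_sigma, Finset.mem_inter, mem_nb] at hcd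
    rcases hone a b c d hab.1 hab.2.1 hcd.1 hcd.2.1 hab.2.2 hcd.2.2 with ⟨rfl, rfl⟩ | ⟨rfl, rfl⟩
    · simp
    · simp
  exact_mod_cast h2

end structure5

section upper
open Classical

lemma own_sum_even {n : ℕ} (G : SimpleGraph (Fin n)) (L : Finset (Fin n)) :
    Even (∑ v ∈ L, (L ∩ nb G v).card) := by
  let H : SimpleGraph (Fin n) :=
    { Adj := fun v w => G.Adj v w ∧ v ∈ L ∧ w ∈ L
      symm := ⟨fun v w h => ⟨h.1.symm, h.2.2, h.2.1⟩⟩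
      loopless := ⟨fun v h => G.loopless.irrefl v h.1⟩ }
  have h1 := H.sum_degrees_eq_twice_card_edges
  have h2 : ∑ v, H.degree v = ∑ v ∈ L, (L ∩ nb G v).card := by
    rw [← Finset.sum_subset (Finset.subset_univ L)]
    · refine Finset.sum_congr rfl fun v hv => ?_
      rw [← SimpleGraph.card_neighborFinset_eq_degree]
      congr 1
      ext w
      simp only [SimpleGraph.mem_neighborFinset, Finset.mem_inter, mem_nb]
      show (G.Adj v w ∧ v ∈ L ∧ w ∈ L) ↔ _
      tauto
    · intro v _ hv
      rw [← SimpleGraph.card_neighborFinset_eq_degree, Finset.card_eq_zero,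
        Finset.eq_empty_iff_forall_notMem]
      intro w hw
      rw [SimpleGraph.mem_neighborFinset] at hw
      exact hv hw.2.1
  rw [← h2, h1]
  exact even_two_mul _

lemma exists_deficient {n k : ℕ} (hk : 2 ≤ k) (hke : Even k) (G : SimpleGraph (Fin n))
    (L : Finset (Fin n))
    (hodd : Odd L.card) (hown : ∀ v ∈ L, (L ∩ nb G v).card ≤ k - 1) :
    ∃ v ∈ L, (L ∩ nb G v).card + 1 ≤ k - 1 := by
  by_contra hcon
  push Not at hcon
  have h1 : ∑ v ∈ L, (L ∩ nb G v).card = L.card * (k - 1) := by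
    rw [Finset.sum_const_nat]
    intro v hv
    have := hcon v hv
    have := hown v hv
    omega
  have h2 := own_sum_even G L
  rw [h1] at h2
  have h3 : Odd (k - 1) := by
    obtain ⟨m, hm⟩ := hke
    exact ⟨m - 1, by omega⟩
  exact (Nat.not_even_iff_odd.2 (hodd.mul h3)) h2

lemma amgm {P Q X Y a b t s : ℝ} (hX : 0 ≤ X) (hY : 0 ≤ Y) (hb : 0 ≤ b)
    (hP : P ^ 2 ≤ a * X) (hQ : Q ^ 2 ≤ b * Y) (ht : 0 ≤ t) (hs : 0 ≤ s) (hts : t * s = a * b) :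
    2 * (P * Q) ≤ t * X + s * Y := by
  apply le_of_sq_le_sq _ (by positivity)
  have h1 : P ^ 2 * Q ^ 2 ≤ (a * X) * (b * Y) :=
    mul_le_mul hP hQ (sq_nonneg _) ((sq_nonneg _).trans hP)
  have h2 : (a * X) * (b * Y) = (t * X) * (s * Y) := by
    calc (a * X) * (b * Y) = (a * b) * (X * Y) := by ring
      _ = (t * s) * (X * Y) := by rw [hts]
      _ = _ := by ring
  nlinarith [sq_nonneg (t * X - s * Y)]

lemma upper_core {n k : ℕ} (hk : 2 ≤ k) (G : SimpleGraph (Fin n)) (x : Fin n → ℝ)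
    (hx2 : ∀ v, x v ≤ 1) (hx0 : ∀ v, 0 ≤ x v)
    (hx : ∀ v, nsum G x v = lam1 G * x v) (L : Finset (Fin n))
    (hone : ∀ a b c d, a ∈ Lᶜ → b ∈ Lᶜ → c ∈ Lᶜ → d ∈ Lᶜ → G.Adj a b → G.Adj c d →
      (a = c ∧ b = d) ∨ (a = d ∧ b = c)) (D : ℝ)
    (hD : ∑ v ∈ L, ((L ∩ nb G v).card : ℝ) * x v ^ 2 ≤ ((k : ℝ) - 1) * ∑ v ∈ L, x v ^ 2 - D) :
    lam1 G * ∑ v, x v ^ 2 ≤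
      (((k : ℝ) - 1) + Real.sqrt (((k : ℝ) - 1) ^ 2 + 4 * ((L.card : ℝ) * (Lᶜ).card))) / 2
        * (∑ v, x v ^ 2) + 2 - D := by
  have hk' : (0 : ℝ) ≤ (k : ℝ) - 1 := by
    have : (2 : ℝ) ≤ k := by exact_mod_cast hk
    linarith
  have h1 := qf_upper G x hx0 L
  have h2 := inner_le G x L
  have h3 := inner_one G Lᶜ x hx0 hx2 hone
  rw [eig_qf G x hx] at h1
  have hP : (∑ v ∈ L, x v) ^ 2 ≤ L.card * ∑ v ∈ L, x v ^ 2 := sq_sum_le_card_mul_sum_sq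
  have hQ : (∑ v ∈ Lᶜ, x v) ^ 2 ≤ (Lᶜ).card * ∑ v ∈ Lᶜ, x v ^ 2 := sq_sum_le_card_mul_sum_sq
  have hsum : ∑ v, x v ^ 2 = ∑ v ∈ L, x v ^ 2 + ∑ v ∈ Lᶜ, x v ^ 2 :=
    (Finset.sum_add_sum_compl L _).symm
  set K : ℝ := (k : ℝ) - 1
  set r := Real.sqrt (K ^ 2 + 4 * ((L.card : ℝ) * (Lᶜ).card)) with hr
  have hr2 : r ^ 2 = K ^ 2 + 4 * ((L.card : ℝ) * (Lᶜ).card) := Real.sq_sqrt (by positivity)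
  have hrK : K ≤ r := Real.le_sqrt_of_sq_le (by
    have : (0 : ℝ) ≤ (L.card : ℝ) * (Lᶜ).card := by positivity
    linarith)
  have h4 := amgm (t := (r - K) / 2) (s := (K + r) / 2)
    (Finset.sum_nonneg fun v _ => sq_nonneg (x v)) (Finset.sum_nonneg fun v _ => sq_nonneg (x v))
    (by positivity) hP hQ (by linarith) (by linarith) (by linarith)
  rw [hsum] at h1 ⊢
  linarith

lemma sqrt_sub_four {q : ℝ} (hq : 4 < q) :
    Real.sqrt (q - 4) ≤ Real.sqrt q - 2 / Real.sqrt q := by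
  have hs : 0 < Real.sqrt q := Real.sqrt_pos.2 (by linarith)
  have hs2 : Real.sqrt q ^ 2 = q := Real.sq_sqrt (by linarith)
  have h2 : 2 ≤ Real.sqrt q := Real.le_sqrt_of_sq_le (by linarith)
  apply Real.sqrt_le_iff.2
  constructor
  · rw [sub_nonneg, div_le_iff₀ hs]
    nlinarith
  · have : (Real.sqrt q - 2 / Real.sqrt q) ^ 2 = Real.sqrt q ^ 2 - 4 + (2 / Real.sqrt q) ^ 2 := by
      field_simp
      ring
    rw [this, hs2]
    have := sq_nonneg (2 / Real.sqrt q)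
    linarith

lemma upper_calc {n k : ℕ} (hk : 6 ≤ k) (hke : Even k) (hn4 : n % 4 = 2)
    (G : SimpleGraph (Fin n)) (x : Fin n → ℝ) {γ : ℝ} (hγ : 0 < γ) (hγ1 : γ ≤ 1 / 3)
    (hkn : 6 * k < γ * n)
    (hx1 : ∀ v, 1 - γ ≤ x v) (hx2 : ∀ v, x v ≤ 1) (hx0 : ∀ v, 0 ≤ x v)
    (hx : ∀ v, nsum G x v = lam1 G * x v) (L : Finset (Fin n))
    (hown : ∀ v ∈ L, (L ∩ nb G v).card ≤ k - 1)
    (hone : ∀ a b c d, a ∈ Lᶜ → b ∈ Lᶜ → c ∈ Lᶜ → d ∈ Lᶜ → G.Adj a b → G.Adj c d →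
      (a = c ∧ b = d) ∨ (a = d ∧ b = c)) :
    (n : ℝ) * (lam1 G - ((k : ℝ) - 1 + Real.sqrt (((k : ℝ) - 1) ^ 2 + (n : ℝ) ^ 2)) / 2)
      ≤ 1 + 13 * γ := by
  have hn0 : (0 : ℝ) < n := by
    have : 0 < n := by omega
    exact_mod_cast this
  have hk6 : (6 : ℝ) ≤ k := by exact_mod_cast hk
  have hW := sq_sum_lower x (by linarith) hx1
  set W := ∑ v, x v ^ 2 with hWd
  have hg : (0 : ℝ) < (1 - γ) ^ 2 := by
    have : (0 : ℝ) < 1 - γ := by linarith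
    positivity
  have hWpos : 0 < W := lt_of_lt_of_le (by positivity) hW
  have hc : (n : ℝ) / W ≤ 1 + 6 * γ := by
    rw [div_le_iff₀ hWpos]
    have h1 : 1 ≤ (1 + 6 * γ) * (1 - γ) ^ 2 := by nlinarith [sq_nonneg γ, mul_pos hγ (mul_pos hγ hγ)]
    calc (n : ℝ) = 1 * n := by ring
      _ ≤ ((1 + 6 * γ) * (1 - γ) ^ 2) * n := by gcongr
      _ = (1 + 6 * γ) * ((1 - γ) ^ 2 * n) := by ring
      _ ≤ _ := by gcongr
  have hcard : L.card + (Lᶜ).card = n := by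
    have := Finset.card_add_card_compl L
    rwa [Fintype.card_fin] at this
  have hbase : ∑ v ∈ L, ((L ∩ nb G v).card : ℝ) * x v ^ 2 ≤ ((k : ℝ) - 1) * ∑ v ∈ L, x v ^ 2 - 0 := by
    rw [sub_zero, Finset.mul_sum]
    refine Finset.sum_le_sum fun v hv => ?_
    have h1 : ((L ∩ nb G v).card : ℝ) + 1 ≤ k := by
      have := hown v hv
      exact_mod_cast (by omega : (L ∩ nb G v).card + 1 ≤ k)
    exact mul_le_mul_of_nonneg_right (by linarith) (sq_nonneg _)
  by_cases hab : L.card = (Lᶜ).card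
  · have hodd : Odd L.card := Nat.odd_iff.2 (by omega)
    obtain ⟨u, hu, hud⟩ := exists_deficient (by omega) hke G L hodd hown
    have hD : ∑ v ∈ L, ((L ∩ nb G v).card : ℝ) * x v ^ 2 ≤
        ((k : ℝ) - 1) * ∑ v ∈ L, x v ^ 2 - x u ^ 2 := by
      rw [Finset.mul_sum, ← Finset.add_sum_erase _ _ hu, ← Finset.add_sum_erase (a := u) L (fun v => ((k : ℝ) - 1) * x v ^ 2) hu]
      have h2 : ∑ v ∈ L.erase u, ((L ∩ nb G v).card : ℝ) * x v ^ 2 ≤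
          ∑ v ∈ L.erase u, ((k : ℝ) - 1) * x v ^ 2 := by
        refine Finset.sum_le_sum fun v hv => ?_
        have h1 : ((L ∩ nb G v).card : ℝ) + 1 ≤ k := by
          have := hown v (Finset.mem_of_mem_erase hv)
          exact_mod_cast (by omega : (L ∩ nb G v).card + 1 ≤ k)
        exact mul_le_mul_of_nonneg_right (by linarith) (sq_nonneg _)
      have h3 : ((L ∩ nb G u).card : ℝ) + 2 ≤ k := by
        exact_mod_cast (by omega : (L ∩ nb G u).card + 2 ≤ k)
      have h4 := mul_le_mul_of_nonneg_right h3 (sq_nonneg (x u))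
      linarith
    have h5 := upper_core (by omega) G x hx2 hx0 hx L hone _ hD
    have hL2 : 4 * ((L.card : ℝ) * (Lᶜ).card) = (n : ℝ) ^ 2 := by
      have : (n : ℝ) = 2 * L.card := by exact_mod_cast (by omega : n = 2 * L.card)
      rw [← hab, this]; ring
    rw [hL2] at h5
    set main := ((k : ℝ) - 1 + Real.sqrt (((k : ℝ) - 1) ^ 2 + (n : ℝ) ^ 2)) / 2
    have hxu : (1 - γ) ^ 2 ≤ x u ^ 2 := pow_le_pow_left₀ (by linarith) (hx1 u) 2
    have h6 : (lam1 G - main) * W ≤ 1 + 2 * γ := by nlinarith [sq_nonneg γ]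
    have h7 : lam1 G - main ≤ (1 + 2 * γ) / W := by rwa [le_div_iff₀ hWpos]
    calc (n : ℝ) * (lam1 G - main) ≤ n * ((1 + 2 * γ) / W) := by gcongr
      _ = (1 + 2 * γ) * (n / W) := by ring
      _ ≤ (1 + 2 * γ) * (1 + 6 * γ) := by gcongr
      _ ≤ 1 + 13 * γ := by nlinarith
  · have h5 := upper_core (by omega) G x hx2 hx0 hx L hone _ hbase
    have hL2 : 4 * ((L.card : ℝ) * (Lᶜ).card) ≤ (n : ℝ) ^ 2 - 4 := by
      have h6 : 2 ≤ |(L.card : ℤ) - (Lᶜ).card| := by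
        rcases lt_or_gt_of_ne hab with h | h
        · rw [abs_of_nonpos (by omega)]; omega
        · rw [abs_of_nonneg (by omega)]; omega
      have h7 : (4 : ℤ) ≤ ((L.card : ℤ) - (Lᶜ).card) ^ 2 := by
        rw [← sq_abs]; nlinarith
      have h8 : (4 : ℝ) ≤ ((L.card : ℝ) - (Lᶜ).card) ^ 2 := by exact_mod_cast h7
      have h9 : (n : ℝ) = L.card + (Lᶜ).card := by exact_mod_cast hcard.symm
      rw [h9]; linarith
    set K : ℝ := (k : ℝ) - 1 with hK
    have hn1 : (4 : ℝ) < n := by nlinarith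
    have h6 : Real.sqrt (K ^ 2 + 4 * ((L.card : ℝ) * (Lᶜ).card)) ≤
        Real.sqrt (K ^ 2 + (n : ℝ) ^ 2) - 2 / Real.sqrt (K ^ 2 + (n : ℝ) ^ 2) := by
      refine le_trans (Real.sqrt_le_sqrt ?_) (sqrt_sub_four ?_)
      · linarith
      · nlinarith [sq_nonneg K]
    set s := Real.sqrt (K ^ 2 + (n : ℝ) ^ 2) with hs
    have hspos : 0 < s := Real.sqrt_pos.2 (by positivity)
    have hsn : s ≤ n + K := Real.sqrt_le_iff.2 ⟨by linarith, by nlinarith⟩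
    have hns : 1 - γ ≤ n / s := by
      rw [le_div_iff₀ hspos]
      have : (1 - γ) * s ≤ (1 - γ) * (n + K) := by gcongr; linarith
      nlinarith
    have h7 : (lam1 G - (K + s) / 2 + 1 / s) * W ≤ 2 := by
      have h8 : (K + Real.sqrt (K ^ 2 + 4 * ((L.card : ℝ) * (Lᶜ).card))) / 2 * W ≤
        ((K + s) / 2 - 1 / s) * W := by
        apply mul_le_mul_of_nonneg_right _ hWpos.le
        have : 2 / s = 2 * (1 / s) := by ring
        linarith
      linarith
    have h9 : lam1 G - (K + s) / 2 + 1 / s ≤ 2 / W := by rwa [le_div_iff₀ hWpos]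
    have h10 : n * (lam1 G - (K + s) / 2 + 1 / s) ≤ n * (2 / W) := by gcongr
    have h11 : (n : ℝ) * (2 / W) = 2 * (n / W) := by ring
    have h12 : (n : ℝ) * (lam1 G - (K + s) / 2 + 1 / s) = n * (lam1 G - (K + s) / 2) + n / s := by ring
    linarith

lemma upper_bound {k : ℕ} (hk : 6 ≤ k) (hke : Even k) {ε : ℝ} (hε : 0 < ε) :
    ∃ n0 : ℕ, ∀ n ≥ n0, n % 4 = 2 → ∀ G : SimpleGraph (Fin n), IsSpexWheel (2 * k + 1) G →
      ((k : ℝ) - 1 + Real.sqrt (((k : ℝ) - 1) ^ 2 + (n : ℝ) ^ 2)) / 2 ≤ lam1 G →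
      (n : ℝ) * (lam1 G - ((k : ℝ) - 1 + Real.sqrt (((k : ℝ) - 1) ^ 2 + (n : ℝ) ^ 2)) / 2)
        ≤ 1 + ε := by
  have hk6 : (6 : ℝ) ≤ k := by exact_mod_cast hk
  have hk0 : (0 : ℝ) < k := by linarith
  set γ : ℝ := min (ε / 13) (1 / (10000 * (k : ℝ) ^ 3)) with hγd
  have hγ : 0 < γ := lt_min (by positivity) (by positivity)
  have hγε : 13 * γ ≤ ε := by
    have := min_le_left (ε / 13) (1 / (10000 * (k : ℝ) ^ 3))
    rw [← hγd] at this
    linarith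
  have hγk : 10000 * (k : ℝ) ^ 3 * γ ≤ 1 := by
    have := min_le_right (ε / 13) (1 / (10000 * (k : ℝ) ^ 3))
    rw [← hγd, le_div_iff₀ (by positivity)] at this
    linarith
  have hkγ : (k + 2) * γ ≤ 1 / 4 := by
    have h1 : 4 * ((k : ℝ) + 2) ≤ 10000 * (k : ℝ) ^ 3 := by
      have : (k : ℝ) ≤ k ^ 3 := by nlinarith [mul_pos hk0 hk0]
      nlinarith
    nlinarith
  have hγ3 : γ ≤ 1 / 3 := by nlinarith
  obtain ⟨n0, hn0⟩ := structure_thm (k := k) (by omega) hγ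
  obtain ⟨n1, hn1⟩ := exists_nat_gt (6 * (k : ℝ) / γ)
  refine ⟨max n0 (max n1 (8 * k)), fun n hn hn4 G hG hlam => ?_⟩
  have hna : n0 ≤ n := (le_max_left _ _).trans hn
  have hnb : n1 ≤ n := ((le_max_left _ _).trans (le_max_right _ _)).trans hn
  have hnc : 8 * k ≤ n := ((le_max_right _ _).trans (le_max_right _ _)).trans hn
  have hnc' : 8 * (k : ℝ) ≤ n := by exact_mod_cast hnc
  have hnb' : (n1 : ℝ) ≤ n := by exact_mod_cast hnb
  have hbig2 : 6 * (k : ℝ) < γ * n := by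
    have := (div_lt_iff₀ hγ).1 (hn1.trans_le hnb')
    linarith
  have hbig : 2 * (k : ℝ) ≤ (1 / 2 - (k + 2) * γ) * n := by nlinarith
  have hs : (n : ℝ) ≤ Real.sqrt (((k : ℝ) - 1) ^ 2 + (n : ℝ) ^ 2) :=
    Real.le_sqrt_of_sq_le (by nlinarith [sq_nonneg ((k : ℝ) - 1)])
  have hlam2 : (n : ℝ) / 2 + ((k : ℝ) - 1) / 2 ≤ lam1 G := by linarith
  obtain ⟨x, hx1, hx2, hx0, hx, L, hstr⟩ := hn0 n hna G hG (by linarith)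
  have hstr : Str G L γ := hstr
  have hsum := deg_sum (k := k) (by omega) G x (by linarith) hx1 hx2 hx0 hx hlam2
  obtain ⟨L', hL', u, hu, huk⟩ := exists_full hk hke hG.1 hγ.le hstr hbig hbig2 (by linarith) (hsum L)
  have hstr' : Str G L' γ := by
    rcases hL' with rfl | rfl
    · exact hstr
    · exact hstr.compl
  have hmany := many_full hk hG.1 hγ.le hstr' hbig hbig2 (by linarith) (hsum L') u hu huk
  have := upper_calc hk hke hn4 G x hγ hγ3 hbig2 hx1 hx2 hx0 hx L'
    (fun v hv => own_deg_le (by omega) hG.1 hγ.le hstr' hbig v hv)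
    (fun a b c d ha hb hc hd hab hcd => one_edge hk hG.1 hγ.le hstr' hbig hbig2 (by linarith) hmany
      a b c d (Finset.mem_compl.1 ha) (Finset.mem_compl.1 hb) (Finset.mem_compl.1 hc)
      (Finset.mem_compl.1 hd) hab hcd)
  linarith

end upper

section regular
open Classical

/-- The circulant graph whose complement is `2h`-regular. -/
def circ (m h : ℕ) [NeZero m] : SimpleGraph (ZMod m) where
  Adj i j := h < (i - j).val ∧ (i - j).val < m - h
  symm := by
    constructor
    intro i j hij
    have h1 : j - i = -(i - j) := by ring
    have h2 : i - j ≠ 0 := by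
      intro h0
      rw [h0, ZMod.val_zero] at hij
      omega
    have h3 := ZMod.val_lt (i - j)
    rw [h1, ZMod.neg_val, if_neg h2]
    omega
  loopless := by
    constructor
    intro i hi
    rw [sub_self, ZMod.val_zero] at hi
    omega

lemma circ_deg (m h : ℕ) [NeZero m] (i : ZMod m) : (nb (circ m h) i).card = m - h - (h + 1) := by
  have h1 : (nb (circ m h) i).image (fun j => (i - j).val) = Finset.Ico (h + 1) (m - h) := by
    ext t
    simp only [Finset.mem_image, mem_nb, Finset.mem_Ico]
    constructor
    · rintro ⟨j, hj, rfl⟩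
      exact ⟨hj.1, hj.2⟩
    · rintro ⟨h1, h2⟩
      have h3 : ((t : ZMod m)).val = t := ZMod.val_natCast_of_lt (by omega)
      refine ⟨i - t, ⟨?_, ?_⟩, ?_⟩ <;> rw [sub_sub_cancel, h3]
      · omega
      · omega
  rw [← Nat.card_Ico, ← h1, Finset.card_image_of_injective]
  intro a b hab
  have := ZMod.val_injective m hab
  simpa using this

lemma exists_regular {k : ℕ} (hk : 2 ≤ k) (hke : Even k) (a : ℕ) (hae : Even a) (hak : k ≤ a) :
    ∃ (V : Type) (_ : Fintype V) (H : SimpleGraph V) (comp : V → ℕ), Fintype.card V = a ∧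
      (∀ v, (nb H v).card = k - 1) ∧ (∀ v w, H.Adj v w → comp v = comp w) ∧
      ∀ c, (Finset.univ.filter (fun v => comp v = c)).card ≤ 2 * k - 2 := by
  induction a using Nat.strong_induction_on with
  | _ a ih =>
  by_cases hlt : a < 2 * k
  · have : NeZero a := ⟨by omega⟩
    refine ⟨ZMod a, inferInstance, circ a ((a - k) / 2), fun _ => 0, ZMod.card a, ?_, ?_, ?_⟩
    · intro v
      rw [circ_deg]
      obtain ⟨p, hp⟩ := hke
      obtain ⟨q, hq⟩ := hae
      omega
    · intros; rfl
    · intro c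
      refine (Finset.card_le_univ _).trans ?_
      rw [ZMod.card]
      obtain ⟨p, hp⟩ := hke
      obtain ⟨q, hq⟩ := hae
      omega
  · obtain ⟨V, hV, H, comp, hcard, hdeg, hcomp, hfib⟩ := ih (a - k) (by omega)
      (by rw [Nat.even_sub (by omega)]; tauto) (by omega)
    refine ⟨V ⊕ Fin k, inferInstance, H ⊕g (⊤ : SimpleGraph (Fin k)),
      Sum.elim (fun v => comp v + 1) (fun _ => 0), ?_, ?_, ?_, ?_⟩
    · rw [Fintype.card_sum, hcard, Fintype.card_fin]; omega
    · rintro (v | i)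
      · have : nb (H ⊕g (⊤ : SimpleGraph (Fin k))) (Sum.inl v) = (nb H v).map Function.Embedding.inl := by
          ext (w | j) <;> simp [mem_nb]
        rw [this, Finset.card_map, hdeg]
      · have : nb (H ⊕g (⊤ : SimpleGraph (Fin k))) (Sum.inr i) =
            (Finset.univ.erase i).map Function.Embedding.inr := by
          ext (w | j) <;> simp [mem_nb, eq_comm]
        rw [this, Finset.card_map, Finset.card_erase_of_mem (Finset.mem_univ _), Finset.card_univ,
          Fintype.card_fin]
    · rintro (v | i) (w | j) h
      · simp at h
        simp [hcomp v w h]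
      · simp at h
      · simp at h
      · rfl
    · intro c
      rcases c with _ | c
      · have : (Finset.univ.filter (fun v : V ⊕ Fin k =>
            Sum.elim (fun v => comp v + 1) (fun _ => 0) v = 0)) ⊆
            (Finset.univ : Finset (Fin k)).map Function.Embedding.inr := by
          intro v
          rcases v with v | j <;> simp
        refine (Finset.card_le_card this).trans ?_
        rw [Finset.card_map, Finset.card_univ, Fintype.card_fin]
        omega
      · have : (Finset.univ.filter (fun v : V ⊕ Fin k =>
            Sum.elim (fun v => comp v + 1) (fun _ => 0) v = c + 1)) ⊆
            (Finset.univ.filter (fun v => comp v = c)).map Function.Embedding.inl := by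
          intro v
          rcases v with v | j <;> simp
        refine (Finset.card_le_card this).trans ?_
        rw [Finset.card_map]
        exact hfib c

/-- The extremal construction. -/
def bigG {V : Type} (H : SimpleGraph V) (b : ℕ) : SimpleGraph (V ⊕ Fin b) where
  Adj p q := match p, q with
    | Sum.inl v, Sum.inl w => H.Adj v w
    | Sum.inl _, Sum.inr _ => True
    | Sum.inr _, Sum.inl _ => True
    | Sum.inr i, Sum.inr j => i ≠ j ∧ i.val ≤ 1 ∧ j.val ≤ 1
  symm := by
    constructor
    rintro (v | i) (w | j) h
    · exact SimpleGraph.Adj.symm (G := H) h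
    · trivial
    · trivial
    · exact ⟨h.1.symm, h.2.2, h.2.1⟩
  loopless := by
    constructor
    rintro (v | i) h
    · exact H.loopless.irrefl v h
    · exact h.1 rfl

lemma succ_mod_ite (t m : ℕ) (hm : 0 < m) : (t + 1) % m = if t % m + 1 = m then 0 else t % m + 1 := by
  have h1 := Nat.mod_lt t hm
  rw [← Nat.mod_add_mod]
  split_ifs with h
  · rw [h, Nat.mod_self]
  · exact Nat.mod_eq_of_lt (by omega)

lemma bigG_free {V : Type} [Fintype V] {k : ℕ} (hk : 2 ≤ k) (H : SimpleGraph V) (comp : V → ℕ)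
    (hdeg : ∀ v, (nb H v).card = k - 1) (hcomp : ∀ v w, H.Adj v w → comp v = comp w)
    (hfib : ∀ c, (Finset.univ.filter (fun v => comp v = c)).card ≤ 2 * k - 2) (b : ℕ) :
    ¬ ContainsCopy (wheelGraph (2 * k + 1)) (bigG H b) := by
  rintro ⟨f, hf⟩
  have hm : 0 < 2 * k := by omega
  set c : ℕ → V ⊕ Fin b := fun t => f ⟨t % (2 * k) + 1, by have := Nat.mod_lt t hm; omega⟩ with hc
  have hcinj : ∀ s t, c s = c t → s ≡ t [MOD 2 * k] := by
    intro s t hst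
    have := f.injective hst
    simp only [Fin.mk.injEq] at this
    exact Nat.succ_injective this
  have hcyc : ∀ t, (bigG H b).Adj (c t) (c (t + 1)) := by
    intro t
    apply hf
    have h1 := succ_mod_ite t (2 * k) hm
    have h2 := Nat.mod_lt t hm
    refine ⟨?_, ?_⟩
    · rw [Ne, Fin.mk.injEq, h1]
      split_ifs <;> omega
    · simp only [h1]
      split_ifs <;> omega
  have hhub : ∀ t, (bigG H b).Adj (f ⟨0, by omega⟩) (c t) := by
    intro t
    apply hf
    refine ⟨?_, Or.inl rfl⟩
    rw [Ne, Fin.mk.injEq]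
    omega
  rcases hu : f ⟨0, by omega⟩ with u | r
  · rw [hu] at hhub
    -- hub in L
    have hcount : ∀ d, ((Finset.range (2 * k)).filter (fun t => (c (t + d)).isLeft)).card ≤ k - 1 := by
      intro d
      rw [← hdeg u, ← Finset.card_map (s := nb H u) (Function.Embedding.inl (β := Fin b))]
      refine Finset.card_le_card_of_injOn (fun t => c (t + d)) ?_ ?_
      · intro t ht
        have ht := (Finset.mem_filter.1 ht).2
        have h1 := hhub (t + d)
        show c (t + d) ∈ _
        rcases hv : c (t + d) with v | j
        · rw [hv] at h1
          have h2 : H.Adj u v := h1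
          simp [mem_nb, h2]
        · rw [hv] at ht
          simp at ht
      · intro s hs t ht hst
        have h1 := (Nat.ModEq.add_right_cancel' d (hcinj _ _ hst))
        have hs' := Finset.mem_range.1 (Finset.mem_filter.1 hs).1
        have ht' := Finset.mem_range.1 (Finset.mem_filter.1 ht).1
        exact Nat.ModEq.eq_of_lt_of_lt h1 hs' ht'
    set A := (Finset.range (2 * k)).filter (fun t => (c (t + 0)).isLeft) with hA
    set B := (Finset.range (2 * k)).filter (fun t => (c (t + 1)).isLeft) with hB
    have hT : 1 < (Finset.range (2 * k) \ (A ∪ B)).card := by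
      have h1 := Finset.le_card_sdiff (A ∪ B) (Finset.range (2 * k))
      have h2 := Finset.card_union_le A B
      have h3 : A.card ≤ k - 1 := by convert hcount 0
      have h4 : B.card ≤ k - 1 := by convert hcount 1
      rw [Finset.card_range] at h1
      omega
    obtain ⟨i, hi, j, hj, hij⟩ := Finset.one_lt_card.1 hT
    have key : ∀ i ∈ Finset.range (2 * k) \ (A ∪ B), ∃ p q : Fin b, c i = Sum.inr p ∧
        c (i + 1) = Sum.inr q ∧ p ≠ q ∧ p.val ≤ 1 ∧ q.val ≤ 1 := by
      intro i hi
      simp only [Finset.mem_sdiff, Finset.mem_union, hA, hB, Finset.mem_filter, add_zero] at hi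
      have h1 := hcyc i
      rcases hp : c i with v | p
      · exfalso; apply hi.2; left; exact ⟨hi.1, by rw [hp]; rfl⟩
      rcases hq : c (i + 1) with v | q
      · exfalso; apply hi.2; right; exact ⟨hi.1, by rw [hq]; rfl⟩
      rw [hp, hq] at h1
      exact ⟨p, q, rfl, rfl, h1⟩
    obtain ⟨p, q, h1, h2, h3, h4, h5⟩ := key i hi
    obtain ⟨p', q', h1', h2', h3', h4', h5'⟩ := key j hj
    have hpp : p ≠ p' := by
      intro h
      rw [← h] at h1'
      have := hcinj _ _ (h1.trans h1'.symm)
      exact hij (Nat.ModEq.eq_of_lt_of_lt this (Finset.mem_range.1 (Finset.mem_sdiff.1 hi).1)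
        (Finset.mem_range.1 (Finset.mem_sdiff.1 hj).1))
    have e1 : q = p' := by
      apply Fin.ext
      have := Fin.val_ne_of_ne hpp
      have := Fin.val_ne_of_ne h3
      omega
    have e2 : q' = p := by
      apply Fin.ext
      have := Fin.val_ne_of_ne hpp
      have := Fin.val_ne_of_ne h3'
      omega
    have m1 := hcinj _ _ (h2.trans ((congrArg Sum.inr e1).trans h1'.symm))
    have m2 := hcinj _ _ (h2'.trans ((congrArg Sum.inr e2).trans h1.symm))
    have m3 : i + 2 ≡ i + 0 [MOD 2 * k] := (Nat.ModEq.add_right 1 m1).trans m2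
    have m4 := Nat.ModEq.add_left_cancel' i m3
    have m5 := Nat.ModEq.eq_of_lt_of_lt m4 (by omega) (by omega)
    omega
  · rw [hu] at hhub
    have hR : ∀ t i, c t = Sum.inr i → r ≠ i ∧ r.val ≤ 1 ∧ i.val ≤ 1 := by
      intro t i h
      have := hhub t
      rw [h] at this
      exact this
    have huniq : ∀ s t i j, c s = Sum.inr i → c t = Sum.inr j → s ≡ t [MOD 2 * k] := by
      intro s t i j hs ht
      apply hcinj
      rw [hs, ht]
      congr 1
      apply Fin.ext
      have h1 := hR s i hs
      have h2 := hR t j ht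
      have := Fin.val_ne_of_ne h1.1
      have := Fin.val_ne_of_ne h2.1
      omega
    obtain ⟨s, hs⟩ : ∃ s, ∀ t, t < 2 * k - 1 → ∃ v, c (s + 1 + t) = Sum.inl v := by
      by_cases hex : ∃ s i, c s = Sum.inr i
      · obtain ⟨s, i, hsi⟩ := hex
        refine ⟨s, fun t ht => ?_⟩
        rcases hv : c (s + 1 + t) with v | j
        · exact ⟨v, rfl⟩
        · exfalso
          have h1 := huniq _ _ _ _ hv hsi
          have h2 : s + (1 + t) ≡ s + 0 [MOD 2 * k] := by rw [← add_assoc]; exact h1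
          have h3 := Nat.ModEq.eq_of_lt_of_lt (Nat.ModEq.add_left_cancel' s h2) (by omega) (by omega)
          omega
      · refine ⟨0, fun t _ => ?_⟩
        rcases hv : c (0 + 1 + t) with v | j
        · exact ⟨v, rfl⟩
        · exact absurd ⟨_, _, hv⟩ hex
    obtain ⟨v0, hv0⟩ := hs 0 (by omega)
    have hall : ∀ t, t < 2 * k - 1 → ∀ v, c (s + 1 + t) = Sum.inl v → comp v = comp v0 := by
      intro t
      induction t with
      | zero =>
        intro _ v hv
        rw [hv0] at hv
        rw [Sum.inl.inj hv]
      | succ t ih =>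
        intro ht v hv
        obtain ⟨w, hw⟩ := hs t (by omega)
        have h1 := ih (by omega) w hw
        have h2 := hcyc (s + 1 + t)
        rw [show s + 1 + t + 1 = s + 1 + (t + 1) by ring, hw, hv] at h2
        rw [← hcomp w v h2, h1]
    have hcardle : (Finset.range (2 * k - 1)).card ≤
        ((Finset.univ.filter (fun v => comp v = comp v0)).map
          (Function.Embedding.inl (β := Fin b))).card := by
      refine Finset.card_le_card_of_injOn (fun t => c (s + 1 + t)) ?_ ?_
      · intro t ht
        have ht := Finset.mem_range.1 ht
        obtain ⟨v, hv⟩ := hs t ht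
        have := hall t ht v hv
        simp only [hv]
        simp [this]
      · intro t ht t' ht' hst
        have h1 := Nat.ModEq.add_left_cancel' _ (hcinj _ _ hst)
        have ht := Finset.mem_range.1 ht
        have ht' := Finset.mem_range.1 ht'
        exact Nat.ModEq.eq_of_lt_of_lt h1 (by omega) (by omega)
    rw [Finset.card_range, Finset.card_map] at hcardle
    have := hfib (comp v0)
    omega

end regular

section lower
open Classical

lemma bigG_qf {V : Type} [Fintype V] {k : ℕ} (hk : 1 ≤ k) (H : SimpleGraph V)
    (hdeg : ∀ v, (nb H v).card = k - 1) (b : ℕ) (hb : 2 ≤ b) (α β : ℝ) :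
    qf (bigG H b) (Sum.elim (fun _ => α) (fun _ => β)) =
      (Fintype.card V : ℝ) * (α * (((k : ℝ) - 1) * α + b * β))
        + b * (β * ((Fintype.card V : ℝ) * α)) + 2 * β ^ 2 := by
  rw [qf_eq_nsum, Fintype.sum_sum_type]
  have hkc : ((k - 1 : ℕ) : ℝ) = (k : ℝ) - 1 := by rw [Nat.cast_sub hk]; simp
  have h1 : ∀ v : V, nsum (bigG H b) (Sum.elim (fun _ => α) (fun _ => β)) (Sum.inl v) =
      ((k : ℝ) - 1) * α + b * β := by
    intro v
    rw [nsum, Fintype.sum_sum_type]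
    congr 1
    · have : ∀ w : V, (if (bigG H b).Adj (Sum.inl v) (Sum.inl w) then
          Sum.elim (fun _ => α) (fun _ => β) (Sum.inl w : V ⊕ Fin b) else 0) =
          if H.Adj v w then α else 0 := fun w => rfl
      have h2 : (Finset.univ.filter (fun w => H.Adj v w)).card = k - 1 := by
        rw [← hdeg v]; rfl
      rw [Finset.sum_congr rfl fun w _ => this w, ← Finset.sum_filter, Finset.sum_const, h2,
        nsmul_eq_mul, hkc]
    · have : ∀ i : Fin b, (if (bigG H b).Adj (Sum.inl v) (Sum.inr i) then
          Sum.elim (fun _ => α) (fun _ => β) (Sum.inr i : V ⊕ Fin b) else 0) = β :=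
        fun i => if_pos trivial
      rw [Finset.sum_congr rfl fun w _ => this w]
      simp
  have h2 : ∀ i : Fin b, nsum (bigG H b) (Sum.elim (fun _ => α) (fun _ => β)) (Sum.inr i) =
      (Fintype.card V : ℝ) * α + if i.val ≤ 1 then β else 0 := by
    intro i
    rw [nsum, Fintype.sum_sum_type]
    congr 1
    · have : ∀ v : V, (if (bigG H b).Adj (Sum.inr i) (Sum.inl v) then
          Sum.elim (fun _ => α) (fun _ => β) (Sum.inl v : V ⊕ Fin b) else 0) = α :=
        fun v => if_pos trivial
      rw [Finset.sum_congr rfl fun w _ => this w]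
      simp
    · have : ∀ j : Fin b, (if (bigG H b).Adj (Sum.inr i) (Sum.inr j) then
          Sum.elim (fun _ => α) (fun _ => β) (Sum.inr j : V ⊕ Fin b) else 0) =
          if i ≠ j ∧ i.val ≤ 1 ∧ j.val ≤ 1 then β else 0 :=
        fun w => if_congr Iff.rfl rfl rfl
      rw [Finset.sum_congr rfl fun w _ => this w]
      split_ifs with hi
      · rw [Finset.sum_eq_single (⟨1 - i.val, by omega⟩ : Fin b)]
        · rw [if_pos]
          refine ⟨?_, hi, ?_⟩
          · intro h
            have := congrArg Fin.val h
            simp only at this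
            omega
          · simp
        · intro j _ hj
          rw [if_neg]
          rintro ⟨h1, _, h3⟩
          apply hj
          apply Fin.ext
          have := Fin.val_ne_of_ne h1
          simp only
          omega
        · simp
      · refine Finset.sum_eq_zero fun j _ => if_neg ?_
        tauto
  simp only [h1, h2, Sum.elim_inl, Sum.elim_inr, mul_add, Finset.sum_add_distrib]
  have h3 : ∑ i : Fin b, β * (if i.val ≤ 1 then β else 0) = 2 * β ^ 2 := by
    have h4 : ∀ i : Fin b, β * (if i.val ≤ 1 then β else 0) = if i.val ≤ 1 then β ^ 2 else 0 := by
      intro i; split_ifs <;> ring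
    rw [Finset.sum_congr rfl fun i _ => h4 i, ← Finset.sum_filter, Finset.sum_const, nsmul_eq_mul]
    congr 1
    have h5 : Finset.univ.filter (fun i : Fin b => i.val ≤ 1) =
        {(⟨0, by omega⟩ : Fin b), ⟨1, by omega⟩} := by
      ext i
      simp only [Finset.mem_filter, Finset.mem_univ, true_and, Finset.mem_insert,
        Finset.mem_singleton, Fin.ext_iff]
      omega
    rw [h5, Finset.card_pair (by simp [Fin.ext_iff])]
    norm_num
  rw [h3]
  simp
  ring

lemma exists_lower {k : ℕ} (hk : 6 ≤ k) (hke : Even k) (n : ℕ) (hn4 : n % 4 = 2) (hn : 2 * k ≤ n) :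
    ∃ G : SimpleGraph (Fin n), WheelFree (2 * k + 1) G ∧ ∀ α β : ℝ,
      ((n : ℝ) / 2 + 1) * (α * (((k : ℝ) - 1) * α + ((n : ℝ) / 2 - 1) * β))
        + ((n : ℝ) / 2 - 1) * (β * (((n : ℝ) / 2 + 1) * α)) + 2 * β ^ 2 ≤
      lam1 G * (((n : ℝ) / 2 + 1) * α ^ 2 + ((n : ℝ) / 2 - 1) * β ^ 2) := by
  obtain ⟨V, hV, H, comp, hcard, hdeg, hcomp, hfib⟩ :=
    exists_regular (by omega) hke (n / 2 + 1) (Nat.even_iff.2 (by omega)) (by omega)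
  have hb : 2 ≤ n / 2 - 1 := by omega
  have e : Fin n ≃ V ⊕ Fin (n / 2 - 1) := Fintype.equivOfCardEq (by
    rw [Fintype.card_sum, hcard, Fintype.card_fin, Fintype.card_fin]; omega)
  have hnr : ((n / 2 : ℕ) : ℝ) = (n : ℝ) / 2 := by
    have : (n : ℝ) = 2 * ((n / 2 : ℕ) : ℝ) := by exact_mod_cast (by omega : n = 2 * (n / 2))
    linarith
  have hbr : ((n / 2 - 1 : ℕ) : ℝ) = (n : ℝ) / 2 - 1 := by
    rw [Nat.cast_sub (by omega), hnr]; simp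
  have har : (Fintype.card V : ℝ) = (n : ℝ) / 2 + 1 := by
    rw [hcard]; push_cast; rw [hnr]
  refine ⟨(bigG H (n / 2 - 1)).comap e, ?_, fun α β => ?_⟩
  · rintro ⟨f, hf⟩
    exact bigG_free (by omega) H comp hdeg hcomp hfib (n / 2 - 1)
      ⟨f.trans e.toEmbedding, fun a b hab => hf a b hab⟩
  · have h1 := bigG_qf (k := k) (by omega) H hdeg (n / 2 - 1) hb α β
    rw [har, hbr] at h1
    rw [← h1]
    have h2 := qf_le ((bigG H (n / 2 - 1)).comap e) (fun v => Sum.elim (fun _ => α) (fun _ => β) (e v))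
    have h3 : qf ((bigG H (n / 2 - 1)).comap e) (fun v => Sum.elim (fun _ => α) (fun _ => β) (e v)) =
        qf (bigG H (n / 2 - 1)) (Sum.elim (fun _ => α) (fun _ => β)) := by
      unfold qf
      rw [← Equiv.sum_comp e]
      refine Finset.sum_congr rfl fun v _ => ?_
      rw [← Equiv.sum_comp e]
      rfl
    have h4 : ∑ v, (Sum.elim (fun _ => α) (fun _ => β) (e v) : ℝ) ^ 2 =
        ((n : ℝ) / 2 + 1) * α ^ 2 + ((n : ℝ) / 2 - 1) * β ^ 2 := by
      rw [Equiv.sum_comp e (fun p => (Sum.elim (fun _ => α) (fun _ => β) p : ℝ) ^ 2),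
        Fintype.sum_sum_type]
      simp [har, hbr]
    rw [h3, h4] at h2
    exact h2

set_option maxHeartbeats 1600000 in
lemma lower_bound {k : ℕ} (hk : 6 ≤ k) (hke : Even k) {ε : ℝ} (hε : 0 < ε) :
    ∃ n0 : ℕ, ∀ n ≥ n0, n % 4 = 2 → ∃ G : SimpleGraph (Fin n), WheelFree (2 * k + 1) G ∧
      1 - ε ≤ (n : ℝ) *
        (lam1 G - ((k : ℝ) - 1 + Real.sqrt (((k : ℝ) - 1) ^ 2 + (n : ℝ) ^ 2)) / 2) := by
  have hk6 : (6 : ℝ) ≤ k := by exact_mod_cast hk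
  set δ : ℝ := min 1 (ε / 8) with hδd
  have hδ : 0 < δ := lt_min one_pos (by positivity)
  have hδ1 : δ ≤ 1 := min_le_left _ _
  have hδε : 8 * δ ≤ ε := by
    have : δ ≤ ε / 8 := min_le_right _ _
    linarith
  obtain ⟨n1, hn1⟩ := exists_nat_gt ((k : ℝ) / δ)
  refine ⟨max n1 (2 * k), fun n hn hn4 => ?_⟩
  have hna : n1 ≤ n := (le_max_left _ _).trans hn
  have hnb : 2 * k ≤ n := (le_max_right _ _).trans hn
  obtain ⟨G, hG, hq⟩ := exists_lower hk hke n hn4 hnb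
  refine ⟨G, hG, ?_⟩
  have hnk : (k : ℝ) ≤ δ * n := by
    have hna' : (n1 : ℝ) ≤ n := by exact_mod_cast hna
    have := (div_lt_iff₀ hδ).1 (hn1.trans_le hna')
    linarith
  have hn12 : (12 : ℝ) ≤ n := by exact_mod_cast (by omega : 12 ≤ n)
  set K : ℝ := (k : ℝ) - 1 with hK
  have hK5 : 5 ≤ K := by rw [hK]; linarith
  set N : ℝ := (n : ℝ) with hN
  set s := Real.sqrt (K ^ 2 + N ^ 2) with hs
  set r := Real.sqrt (K ^ 2 + N ^ 2 - 4) with hr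
  have hs2 : s ^ 2 = K ^ 2 + N ^ 2 := Real.sq_sqrt (by positivity)
  have hr2 : r ^ 2 = K ^ 2 + N ^ 2 - 4 := Real.sq_sqrt (by nlinarith)
  have hsN : N ≤ s := Real.le_sqrt_of_sq_le (by nlinarith)
  have hrN : N ≤ r := Real.le_sqrt_of_sq_le (by nlinarith)
  have hrs : r ≤ s := Real.sqrt_le_sqrt (by linarith)
  have hsu : s ≤ N + K := Real.sqrt_le_iff.2 ⟨by linarith, by nlinarith⟩
  set θ := (K + r) / 2 with hθ
  have hθ2 : θ ^ 2 = K * θ + (N / 2 + 1) * (N / 2 - 1) := by rw [hθ]; linarith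
  have hθu : θ ≤ N / 2 + K := by rw [hθ]; linarith
  have hθ0 : 0 < θ := by rw [hθ]; linarith
  have h1 := hq θ (N / 2 + 1)
  set a := N / 2 + 1 with ha
  set b := N / 2 - 1 with hb
  have ha0 : 0 < a := by rw [ha]; linarith
  have hb0 : 0 < b := by rw [hb]; linarith
  have h2 : θ * (θ ^ 2 + a * b) + 2 * a ≤ lam1 G * (θ ^ 2 + a * b) := by
    have e1 : a * (θ * (K * θ + b * a)) + b * (a * (a * θ)) + 2 * a ^ 2 =
        a * (θ * (θ ^ 2 + a * b) + 2 * a) := by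
      rw [hθ2]; ring
    have e2 : lam1 G * (a * θ ^ 2 + b * a ^ 2) = a * (lam1 G * (θ ^ 2 + a * b)) := by ring
    rw [e1, e2] at h1
    exact le_of_mul_le_mul_left h1 ha0
  have hden0 : 0 < θ ^ 2 + a * b := by positivity
  have h3 : 2 * a / (θ ^ 2 + a * b) ≤ lam1 G - θ := by
    rw [div_le_iff₀ hden0]; linarith
  have hden : θ ^ 2 + a * b ≤ N ^ 2 * (1 / 2 + 2 * δ) := by
    have h4 : θ ^ 2 ≤ (N / 2 + K) ^ 2 := pow_le_pow_left₀ hθ0.le hθu 2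
    have h5 : a * b ≤ N ^ 2 / 4 := by rw [ha, hb]; linarith
    have hKδ : K ≤ δ * N := by linarith
    have h6 : K ^ 2 ≤ δ * N ^ 2 := by
      have hKN : K ≤ N := by nlinarith
      calc K ^ 2 = K * K := by ring
        _ ≤ (δ * N) * N := mul_le_mul hKδ hKN (by linarith) (by positivity)
        _ = δ * N ^ 2 := by ring
    have h7 : N * K ≤ δ * N ^ 2 := by
      calc N * K ≤ N * (δ * N) := mul_le_mul_of_nonneg_left hKδ (by linarith)
        _ = δ * N ^ 2 := by ring
    linarith
  have h8 : 2 - 8 * δ ≤ N * (2 * a / (θ ^ 2 + a * b)) := by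
    rw [← mul_div_assoc, le_div_iff₀ hden0]
    have h9 : N ^ 2 ≤ N * (2 * a) := by rw [ha]; nlinarith
    refine le_trans ?_ h9
    by_cases hneg : 2 - 8 * δ ≤ 0
    · nlinarith
    · have : (2 - 8 * δ) * (θ ^ 2 + a * b) ≤ (2 - 8 * δ) * (N ^ 2 * (1 / 2 + 2 * δ)) :=
        mul_le_mul_of_nonneg_left hden (by linarith)
      have h10 : (2 - 8 * δ) * (1 / 2 + 2 * δ) ≤ 1 := by nlinarith [sq_nonneg δ]
      have hN2 : 0 ≤ N ^ 2 := by positivity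
      nlinarith
  have h11 : -1 ≤ N * (θ - (K + s) / 2) := by
    have h12 : (s - r) * (s + r) = 4 := by linarith
    have h13 : (s - r) * (2 * N) ≤ 4 := by
      rw [← h12]
      exact mul_le_mul_of_nonneg_left (by linarith) (by linarith)
    rw [hθ]; linarith
  have h14 : N * (2 * a / (θ ^ 2 + a * b)) ≤ N * (lam1 G - θ) :=
    mul_le_mul_of_nonneg_left h3 (by linarith)
  linarith

lemma exists_spex {k n : ℕ} (h : ∃ G : SimpleGraph (Fin n), WheelFree (2 * k + 1) G) :
    ∃ G : SimpleGraph (Fin n), IsSpexWheel (2 * k + 1) G ∧ spexWheel k n = lam1 G := by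
  set s : Set (SimpleGraph (Fin n)) := {G | WheelFree (2 * k + 1) G} with hs
  obtain ⟨G, hG, hmax⟩ := Set.exists_max_image s lam1 (Set.toFinite s) h
  refine ⟨G, ⟨hG, hmax⟩, ?_⟩
  unfold spexWheel
  apply IsGreatest.csSup_eq
  refine ⟨⟨G, hG, rfl⟩, ?_⟩
  rintro x ⟨H, hH, rfl⟩
  exact hmax H hH

end lower

/-- For even `k ≥ 6`, as `n → ∞` along `n ≡ 2 (mod 4)`,
`n·(spex(n, W_{2k+1}) - (k - 1 + √((k-1)² + n²))/2) → 1`. -/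
theorem spex_asymptotics_mod_four (k : ℕ) (hk : 6 ≤ k) (hke : Even k) :
    Filter.Tendsto
      (fun n : ℕ => (n : ℝ) *
        (spexWheel k n -
          ((k : ℝ) - 1 + Real.sqrt (((k : ℝ) - 1) ^ 2 + (n : ℝ) ^ 2)) / 2))
      (Filter.atTop ⊓ Filter.principal {n : ℕ | n % 4 = 2}) (nhds 1) := by
  rw [Metric.tendsto_nhds]
  intro ε hε
  rw [Filter.eventually_inf_principal]
  set δ : ℝ := min (ε / 2) (1 / 2) with hδd
  have hδ : 0 < δ := lt_min (by positivity) (by norm_num)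
  have hδε : δ < ε := lt_of_le_of_lt (min_le_left _ _) (by linarith)
  have hδ1 : δ ≤ 1 / 2 := min_le_right _ _
  obtain ⟨n0, h0⟩ := lower_bound hk hke hδ
  obtain ⟨n1, h1⟩ := upper_bound hk hke hδ
  filter_upwards [Filter.eventually_ge_atTop (max n0 (max n1 1))] with n hn hn4
  have hna : n0 ≤ n := (le_max_left _ _).trans hn
  have hnb : n1 ≤ n := ((le_max_left _ _).trans (le_max_right _ _)).trans hn
  have hnc : 1 ≤ n := ((le_max_right _ _).trans (le_max_right _ _)).trans hn
  have hn0 : (0 : ℝ) < n := by exact_mod_cast hnc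
  obtain ⟨G0, hG0, hlow⟩ := h0 n hna hn4
  obtain ⟨G, hG, hspex⟩ := exists_spex ⟨G0, hG0⟩
  rw [hspex]
  have hle := hG.2 G0 hG0
  set main := ((k : ℝ) - 1 + Real.sqrt (((k : ℝ) - 1) ^ 2 + (n : ℝ) ^ 2)) / 2 with hmain
  have hlow2 : 1 - δ ≤ (n : ℝ) * (lam1 G - main) :=
    hlow.trans (mul_le_mul_of_nonneg_left (by linarith) hn0.le)
  have hge : main ≤ lam1 G := by
    by_contra hcon
    have : (n : ℝ) * (lam1 G - main) ≤ 0 :=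
      mul_nonpos_of_nonneg_of_nonpos hn0.le (by linarith)
    linarith
  have hup := h1 n hnb hn4 G hG hge
  rw [← hmain] at hup
  rw [Real.dist_eq, abs_lt]
  constructor <;> linarith
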